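/- arXiv:2411.15107 — 2 statements merged into one kernel-verified Lean document; each statement's English description precedes it below -/
import Mathlib

section
/- Let M be a complete pointed metric space such that every compact subset of M is contained in a compact Lipschitz retract of M (i.e., a compact set L ⊂ M for which there is a Lipschitz map π : M → L with π(x) = x for all x ∈ L). Then property (V*) is compactly determined for F(M): if F(K∪{0}) has property (V*) for every compact K ⊂ M, then F(M) has property (V*). -/
open Filter Topology Metric Set

noncomputable section

/-- A formal series `∑ yₙ` in a normed space `Y` is weakly unconditionally Cauchy (WUC)
if `∑ |⟨φ, yₙ⟩| < ∞` for every continuous linear functional `φ` on `Y`. -/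
def IsWUC {Y : Type*} [SeminormedAddCommGroup Y] [NormedSpace ℝ Y] (y : ℕ → Y) : Prop :=
  ∀ φ : Y →L[ℝ] ℝ, Summable fun n => |φ (y n)|

/-- `Γ` is a (V*)-set in `X`: for every WUC series `∑ fₙ` in the dual `X*`,
`sup_{x ∈ Γ} |⟨x, fₙ⟩| → 0`. -/
def IsVStarSet {X : Type*} [SeminormedAddCommGroup X] [NormedSpace ℝ X] (Γ : Set X) : Prop :=
  ∀ f : ℕ → (X →L[ℝ] ℝ), IsWUC f →
    ∀ ε > (0 : ℝ), ∀ᶠ n in atTop, ∀ x ∈ Γ, |f n x| ≤ ε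

/-- `Γ` is relatively weakly compact: its closure in the weak topology is compact. -/
def RelWeaklyCompact {X : Type*} [SeminormedAddCommGroup X] [NormedSpace ℝ X]
    (Γ : Set X) : Prop :=
  IsCompact (closure ((toWeakSpace ℝ X) '' Γ))

/-- A normed space has Pełczyński's property (V*) if every (V*)-set is relatively
weakly compact. -/
def HasPropertyVStar (X : Type*) [SeminormedAddCommGroup X] [NormedSpace ℝ X] : Prop :=
  ∀ Γ : Set X, IsVStarSet Γ → RelWeaklyCompact Γ

/-- `F`, together with the map `δ : M → F`, is (a realization of) the Lipschitz-free space
over the pointed metric space `(M, o)`: `δ` is a base-point-preserving isometric embedding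
whose range has dense linear span, and every Lipschitz function `f : M → ℝ` vanishing at
the base point lifts to a continuous linear functional of norm at most `Lip(f)` (this
characterizes `F(M)`, with dual `Lip₀(M)`, up to isometric isomorphism). -/
structure IsLipschitzFree {M : Type*} [MetricSpace M] (o : M)
    {F : Type*} [NormedAddCommGroup F] [NormedSpace ℝ F] (δ : M → F) : Prop where
  isometry : Isometry δ
  map_base : δ o = 0
  dense_span : Dense (Submodule.span ℝ (Set.range δ) : Set F)
  lift : ∀ (L : NNReal) (f : M → ℝ), LipschitzWith L f → f o = 0 →
    ∃ φ : F →L[ℝ] ℝ, ‖φ‖ ≤ L ∧ ∀ x, φ (δ x) = f x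

/-- The subspace of `F` corresponding to the Lipschitz-free space `F(S)` over a subset
`S ⊆ M`: the closed linear span of `δ(S)`. -/
def freeSpan {M : Type*} [MetricSpace M] {F : Type*} [NormedAddCommGroup F]
    [NormedSpace ℝ F] (δ : M → F) (S : Set M) : Submodule ℝ F :=
  (Submodule.span ℝ (δ '' S)).topologicalClosure

theorem mem_freeSpan {M : Type*} [MetricSpace M] {F : Type*} [NormedAddCommGroup F]
    [NormedSpace ℝ F] (δ : M → F) {S : Set M} {x : M} (hx : x ∈ S) :
    δ x ∈ freeSpan δ S :=
  (Submodule.span ℝ (δ '' S)).le_topologicalClosure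
    (Submodule.subset_span ⟨x, hx, rfl⟩)

/-!
The heart of the matter is Kalton's lemma: for a (V*)-set `Γ ⊆ F(M)` and `η, r > 0` there is a
finite set `E` such that every norm-one functional vanishing on the conical neighbourhood
`{x | d(x, E) ≤ r d(x, 0)}` is at most `η` on `Γ`. Otherwise one picks inductively functionals that
are large somewhere on `Γ` and vanish on the conical neighbourhood of all points used so far, and
cuts each of them down to finitely many narrow spikes. The spikes have pairwise disjoint supports,
so their series is WUC in `Lip₀(M)`, against `Γ` being a (V*)-set.

Hence multiplication by a Lipschitz cutoff around such a neighbourhood moves `Γ` by little.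
Iterating with `r → 0`, the neighbourhoods shrink to a compact set `K`, and the successive images of
`Γ` converge uniformly to a (V*)-set in `F(K)` that is uniformly close to `Γ`. A Lipschitz
retraction onto a compact `L ⊇ K` induces an operator `F(M) → F(L)` fixing `F(K)`, so property (V*)
of `F(L)` makes this limit set relatively weakly compact. Finally, a set that is approximated
uniformly by relatively weakly compact sets is relatively weakly compact, by Grothendieck's bidual
argument.
-/

section WeakTopology

variable {X Y : Type*} [SeminormedAddCommGroup X] [NormedSpace ℝ X]
  [SeminormedAddCommGroup Y] [NormedSpace ℝ Y]

theorem exists_norm_le_of_forall_dual {ι : Type*} {x : ι → X}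
    (h : ∀ φ : X →L[ℝ] ℝ, ∃ C, ∀ i, ‖φ (x i)‖ ≤ C) : ∃ C, ∀ i, ‖x i‖ ≤ C := by
  obtain ⟨C, hC⟩ :=
    banach_steinhaus (g := fun i => NormedSpace.inclusionInDoubleDual ℝ X (x i)) h
  exact ⟨C, fun i => ((NormedSpace.inclusionInDoubleDualLi ℝ).norm_map (x i)).ge.trans (hC i)⟩

theorem mem_topologicalClosure_span_of_forall_dual {s : Set X} {x : X}
    (h : ∀ φ : X →L[ℝ] ℝ, (∀ y ∈ s, φ y = 0) → φ x = 0) :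
    x ∈ (Submodule.span ℝ s).topologicalClosure := by
  set p := (Submodule.span ℝ s).topologicalClosure
  have : IsClosed (p : Set X) := Submodule.isClosed_topologicalClosure _
  rw [← Submodule.Quotient.mk_eq_zero]
  refine SeparatingDual.eq_zero_of_forall_dual_eq_zero (R := ℝ) fun φ => ?_
  refine h (φ.comp p.mkQL) fun y hy => ?_
  have hyp : y ∈ p := Submodule.le_topologicalClosure _ (Submodule.subset_span hy)
  simp [(Submodule.Quotient.mk_eq_zero p).2 hyp]

theorem tendsto_apply_of_dense_span {ι : Type*} {l : Filter ι} {T : ι → X →L[ℝ] Y}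
    {T₀ : X →L[ℝ] Y} {C : NNReal} (hT : ∀ i, ‖T i‖ ≤ C) {s : Set X}
    (hs : Dense (Submodule.span ℝ s : Set X))
    (h : ∀ x ∈ s, Tendsto (fun i => T i x) l (𝓝 (T₀ x))) (x : X) :
    Tendsto (fun i => T i x) l (𝓝 (T₀ x)) := by
  have hequi : Equicontinuous fun i => (T i : X → Y) :=
    (LipschitzWith.uniformEquicontinuous _ C fun i =>
      (T i).lipschitz.weaken (by exact_mod_cast hT i)).equicontinuous
  refine hs.induction (P := fun x => Tendsto (fun i => T i x) l (𝓝 (T₀ x))) (fun y hy => ?_)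
    (hequi.isClosed_setOfPred_tendsto T₀.continuous) x
  induction hy using Submodule.span_induction with
  | mem y hy => exact h y hy
  | zero => simpa only [map_zero] using tendsto_const_nhds
  | add y z _ _ hy hz => simpa only [map_add] using hy.add hz
  | smul c y _ hy => simpa only [map_smul] using hy.const_smul c

theorem RelWeaklyCompact.image {Γ : Set X} (hΓ : RelWeaklyCompact Γ) (T : X →L[ℝ] Y) :
    RelWeaklyCompact (T '' Γ) := by
  refine (IsCompact.image hΓ (WeakSpace.map T).continuous).closure_of_subset ?_
  rintro _ ⟨_, ⟨x, hx, rfl⟩, rfl⟩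
  exact ⟨toWeakSpace ℝ X x, subset_closure (mem_image_of_mem _ hx), rfl⟩

theorem RelWeaklyCompact.isBounded {Γ : Set X} (hΓ : RelWeaklyCompact Γ) :
    Bornology.IsBounded Γ := by
  obtain ⟨C, hC⟩ := exists_norm_le_of_forall_dual (x := ((↑) : Γ → X)) fun φ => by
    have hφ : Continuous fun x : WeakSpace ℝ X => φ ((toWeakSpace ℝ X).symm x) :=
      WeakBilin.eval_continuous (topDualPairing ℝ X).flip φ
    obtain ⟨C, hC⟩ := (IsCompact.image hΓ hφ).isBounded.exists_norm_le
    exact ⟨C, fun x => hC _ ⟨_, subset_closure (mem_image_of_mem _ x.2), rfl⟩⟩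
  exact isBounded_iff_forall_norm_le.2 ⟨C, fun x hx => hC ⟨x, hx⟩⟩

open scoped Pointwise in
theorem closure_image_inclusionInDoubleDualWeak_subset {Γ Δ : Set X} (hΔ : RelWeaklyCompact Δ)
    {ε : ℝ} (h : ∀ x ∈ Γ, ∃ y ∈ Δ, ‖x - y‖ ≤ ε) :
    closure (NormedSpace.inclusionInDoubleDualWeak ℝ X '' (toWeakSpace ℝ X '' Γ)) ⊆
      NormedSpace.inclusionInDoubleDualWeak ℝ X '' closure (toWeakSpace ℝ X '' Δ) +
        WeakDual.toStrongDual ⁻¹' closedBall 0 ε := by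
  set J := NormedSpace.inclusionInDoubleDualWeak ℝ X
  refine closure_minimal ?_
    ((WeakDual.isClosed_closedBall 0 ε).add_left_of_isCompact (IsCompact.image hΔ J.continuous))
  rintro _ ⟨_, ⟨x, hx, rfl⟩, rfl⟩
  obtain ⟨y, hy, hxy⟩ := h x hx
  refine ⟨J (toWeakSpace ℝ X y), mem_image_of_mem _ (subset_closure (mem_image_of_mem _ hy)),
    J (toWeakSpace ℝ X (x - y)), ?_, by simp⟩
  exact (mem_closedBall_zero_iff (a := NormedSpace.inclusionInDoubleDual ℝ X (x - y))).2
    ((NormedSpace.double_dual_bound ℝ X (x - y)).trans hxy)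

end WeakTopology

theorem relWeaklyCompact_of_forall_approx {X : Type*} [NormedAddCommGroup X] [NormedSpace ℝ X]
    [CompleteSpace X] {Γ : Set X}
    (h : ∀ ε > 0, ∃ Δ : Set X, RelWeaklyCompact Δ ∧ ∀ x ∈ Γ, ∃ y ∈ Δ, ‖x - y‖ ≤ ε) :
    RelWeaklyCompact Γ := by
  refine NormedSpace.isCompact_closure_of_isBounded ℝ X _ ?_ fun Φ hΦ => ?_
  · rw [preimage_image_eq _ (toWeakSpace ℝ X).injective]
    obtain ⟨Δ, hΔ, hΓΔ⟩ := h 1 one_pos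
    refine (hΔ.isBounded.cthickening (δ := 1)).subset fun x hx => ?_
    obtain ⟨y, hy, hxy⟩ := hΓΔ x hx
    exact mem_cthickening_of_dist_le x y 1 Δ hy (by rwa [dist_eq_norm])
  -- A weak* limit of `Γ` in the bidual is within every `ε` of the norm closed subspace `X`.
  · have hclosed :=
      (NormedSpace.inclusionInDoubleDualLi ℝ (E := X)).isometry.isUniformInducing
        |>.isComplete_range.isClosed
    change WeakDual.toStrongDual Φ ∈ range (NormedSpace.inclusionInDoubleDualLi ℝ (E := X))
    rw [← hclosed.closure_eq]
    refine Metric.mem_closure_iff.2 fun ε hε => ?_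
    obtain ⟨Δ, hΔ, hΓΔ⟩ := h (ε / 2) (half_pos hε)
    obtain ⟨_, ⟨y, -, rfl⟩, Ψ, hΨ, rfl⟩ :=
      closure_image_inclusionInDoubleDualWeak_subset hΔ hΓΔ hΦ
    refine ⟨_, mem_range_self ((toWeakSpace ℝ X).symm y), ?_⟩
    calc dist (WeakDual.toStrongDual (NormedSpace.inclusionInDoubleDualWeak ℝ X y + Ψ))
          (NormedSpace.inclusionInDoubleDualLi ℝ ((toWeakSpace ℝ X).symm y))
        = ‖WeakDual.toStrongDual Ψ‖ := by
          rw [map_add]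
          exact dist_self_add_left (E := StrongDual ℝ (StrongDual ℝ X)) _ _
      _ ≤ ε / 2 := (mem_closedBall_zero_iff (a := WeakDual.toStrongDual Ψ)).1 hΨ
      _ < ε := half_lt_self hε

section WUC

variable {X Y : Type*} [SeminormedAddCommGroup X] [NormedSpace ℝ X]
  [SeminormedAddCommGroup Y] [NormedSpace ℝ Y]

theorem IsWUC.map {x : ℕ → X} (hx : IsWUC x) (T : X →L[ℝ] Y) : IsWUC fun n => T (x n) :=
  fun φ => hx (φ.comp T)

theorem IsWUC.exists_norm_le {x : ℕ → X} (hx : IsWUC x) : ∃ C, ∀ n, ‖x n‖ ≤ C :=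
  exists_norm_le_of_forall_dual fun φ =>
    ⟨∑' n, |φ (x n)|, fun n => (hx φ).le_tsum n fun _ _ => abs_nonneg _⟩

theorem isWUC_of_forall_norm_sum_le {x : ℕ → X} {C : ℝ}
    (h : ∀ (ε : ℕ → SignType) (A : Finset ℕ), ‖∑ n ∈ A, (ε n : ℝ) • x n‖ ≤ C) : IsWUC x := by
  intro φ
  refine summable_of_sum_le (c := ‖φ‖ * C) (fun _ => abs_nonneg _) fun A => ?_
  calc ∑ n ∈ A, |φ (x n)|
      = φ (∑ n ∈ A, (SignType.sign (φ (x n)) : ℝ) • x n) := by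
        simp only [map_sum, map_smul, smul_eq_mul, sign_mul_self]
    _ ≤ ‖φ‖ * C := (le_abs_self _).trans
        ((φ.le_opNorm _).trans (mul_le_mul_of_nonneg_left (h _ A) (norm_nonneg φ)))

theorem IsVStarSet.image {Γ : Set X} (hΓ : IsVStarSet Γ) (T : X →L[ℝ] Y) :
    IsVStarSet (T '' Γ) := by
  intro f hf ε hε
  filter_upwards [hΓ _ (hf.map ((ContinuousLinearMap.compL ℝ X Y ℝ).flip T)) ε hε] with n hn
  exact forall_mem_image.2 hn

theorem IsVStarSet.of_forall_approx {Γ : Set X}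
    (h : ∀ ε > 0, ∃ Δ : Set X, IsVStarSet Δ ∧ ∀ x ∈ Γ, ∃ y ∈ Δ, ‖x - y‖ ≤ ε) :
    IsVStarSet Γ := by
  intro f hf ε hε
  obtain ⟨C, hC⟩ := hf.exists_norm_le
  have hC0 : 0 ≤ C := (norm_nonneg _).trans (hC 0)
  obtain ⟨Δ, hΔ, hΓΔ⟩ := h (ε / (2 * (C + 1))) (by positivity)
  filter_upwards [hΔ f hf (ε / 2) (half_pos hε)] with n hn x hx
  obtain ⟨y, hy, hxy⟩ := hΓΔ x hx
  calc |f n x| = |f n (x - y) + f n y| := by rw [map_sub, sub_add_cancel]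
    _ ≤ |f n (x - y)| + |f n y| := abs_add_le _ _
    _ ≤ (C + 1) * (ε / (2 * (C + 1))) + ε / 2 := by
        gcongr
        · exact (f n).le_of_opNorm_le_of_le ((hC n).trans (by linarith)) hxy
        · exact hn y hy
    _ = ε := by field_simp; ring

theorem IsVStarSet.image_of_tendstoUniformlyOn {ι : Type*} {l : Filter ι} [l.NeBot] {Γ : Set X}
    (hΓ : IsVStarSet Γ) {T : ι → X →L[ℝ] Y} {S : X → Y}
    (h : TendstoUniformlyOn (fun i x => T i x) S l Γ) : IsVStarSet (S '' Γ) := by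
  refine IsVStarSet.of_forall_approx fun ε hε => ?_
  obtain ⟨i, hi⟩ := (Metric.tendstoUniformlyOn_iff.1 h ε hε).exists
  refine ⟨T i '' Γ, hΓ.image (T i), forall_mem_image.2 fun x hx =>
    ⟨T i x, mem_image_of_mem _ hx, ?_⟩⟩
  rw [← dist_eq_norm]
  exact (hi x hx).le

end WUC

section Metric

theorem lipschitzWith_sum_of_disjoint_support {ι α E : Type*} [PseudoMetricSpace α]
    [SeminormedAddCommGroup E] {f : ι → α → E} {C : NNReal} (hf : ∀ i, LipschitzWith C (f i))
    (hd : Pairwise fun i j => Disjoint (Function.support (f i)) (Function.support (f j)))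
    (A : Finset ι) : LipschitzWith (2 * C) fun x => ∑ i ∈ A, f i x := by
  classical
  have hcard : ∀ x, (A.filter fun i => f i x ≠ 0).card ≤ 1 := fun x => by
    refine Finset.card_le_one.2 fun i hi j hj => hd.eq ?_
    exact not_disjoint_iff.2 ⟨x, (Finset.mem_filter.1 hi).2, (Finset.mem_filter.1 hj).2⟩
  refine LipschitzWith.of_dist_le_mul fun x y => ?_
  set B := (A.filter fun i => f i x ≠ 0) ∪ A.filter fun i => f i y ≠ 0
  have hB : B.card ≤ 2 := (Finset.card_union_le _ _).trans (add_le_add (hcard x) (hcard y))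
  have hBA : B ⊆ A := Finset.union_subset (Finset.filter_subset _ _) (Finset.filter_subset _ _)
  calc dist (∑ i ∈ A, f i x) (∑ i ∈ A, f i y)
      = ‖∑ i ∈ A, (f i x - f i y)‖ := by rw [dist_eq_norm, Finset.sum_sub_distrib]
    _ = ‖∑ i ∈ B, (f i x - f i y)‖ := by
        rw [Finset.sum_subset hBA fun _ hiA hiB => ?_]
        simp only [B, Finset.mem_union, Finset.mem_filter, hiA, true_and, not_or, not_not] at hiB
        rw [hiB.1, hiB.2, sub_zero]
    _ ≤ ∑ _ ∈ B, C * dist x y := norm_sum_le_of_le _ fun i _ => by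
        rw [← dist_eq_norm]
        exact (hf i).dist_le_mul x y
    _ = B.card * (C * dist x y) := by rw [Finset.sum_const, nsmul_eq_mul]
    _ ≤ 2 * (C * dist x y) := by gcongr; exact_mod_cast hB
    _ = (2 * C : NNReal) * dist x y := by push_cast; ring

theorem iInf_principal_le_nhdsSet_iInter {ι α : Type*} [UniformSpace α] [CompleteSpace α]
    {A : ι → Set α} (hA : ∀ i, IsClosed (A i)) (htb : (⨅ i, 𝓟 (A i)).TotallyBounded) :
    ⨅ i, 𝓟 (A i) ≤ 𝓝ˢ (⋂ i, A i) := by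
  refine le_iff_ultrafilter.2 fun u hu => ?_
  obtain ⟨x, hx⟩ := CompleteSpace.complete (Filter.totallyBounded_iff_ultrafilter.1 htb u hu)
  have hmem : ∀ i, x ∈ A i := fun i =>
    isClosed_iff_ultrafilter.1 (hA i) x u hx (le_principal_iff.1 (hu.trans (iInf_le _ i)))
  exact hx.trans (nhds_le_nhdsSet (mem_iInter.2 hmem))

theorem isCompact_iInter_of_totallyBounded_iInf_principal {ι α : Type*} [UniformSpace α]
    [CompleteSpace α] {A : ι → Set α} (hA : ∀ i, IsClosed (A i))
    (htb : (⨅ i, 𝓟 (A i)).TotallyBounded) : IsCompact (⋂ i, A i) := by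
  refine TotallyBounded.isCompact_of_isClosed ?_ (isClosed_iInter hA)
  exact Filter.totallyBounded_principal_iff.1
    (htb.mono (le_iInf fun i => principal_mono.2 (iInter_subset A i)))

theorem tendsto_biInter_smallSets {α : Type*} {A : ℕ → Set α} {l : Filter α}
    (h : ⨅ n, 𝓟 (A n) ≤ l) : Tendsto (fun n => ⋂ j < n, A j) atTop l.smallSets := by
  refine tendsto_smallSets_iff.2 fun V hV => ?_
  obtain ⟨t, ht, htV⟩ := (hasBasis_iInf_principal_finite A).mem_iff.1 (h hV)
  obtain ⟨N, hN⟩ := ht.bddAbove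
  filter_upwards [eventually_gt_atTop N] with n hn
  exact (biInter_mono (fun j hj => (hN hj).trans_lt hn) fun _ _ => Subset.rfl).trans htV

theorem tendstoUniformlyOn_of_le_geometric_two {α β : Type*} [PseudoMetricSpace β]
    {f : ℕ → α → β} {g : α → β} {s : Set α} {C : ℝ}
    (hf : ∀ n, ∀ x ∈ s, dist (f n x) (f (n + 1) x) ≤ C / 2 / 2 ^ n)
    (hg : ∀ x ∈ s, Tendsto (fun n => f n x) atTop (𝓝 (g x))) :
    TendstoUniformlyOn f g atTop s := by
  refine Metric.tendstoUniformlyOn_iff.2 fun ε hε => ?_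
  have hlim : Tendsto (fun n : ℕ => C / 2 ^ n) atTop (𝓝 0) :=
    (tendsto_pow_atTop_atTop_of_one_lt one_lt_two).const_div_atTop C
  filter_upwards [hlim.eventually_lt_const hε] with n hn x hx
  rw [dist_comm]
  exact (dist_le_of_le_geometric_two_of_tendsto (fun n => hf n x hx) (hg x hx) n).trans_lt hn

variable {M : Type*} [PseudoMetricSpace M] {o : M}

/-- The part of `M` close to `E` relative to the base point `o`: the points whose distance to `E`
is at most `r` times their distance to `o`. -/
def conicalNhd (o : M) (r : ℝ) (E : Set M) : Set M :=
  {x | infDist x E ≤ r * dist x o}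

theorem isClosed_conicalNhd (o : M) (r : ℝ) (E : Set M) : IsClosed (conicalNhd o r E) :=
  isClosed_le (continuous_infDist_pt E) (continuous_const.mul (continuous_id.dist continuous_const))

theorem conicalNhd_subset_closedBall {r R : ℝ} {E : Set M} (hr : r ≤ 1 / 2) (hne : E.Nonempty)
    (hE : E ⊆ closedBall o R) : conicalNhd o r E ⊆ closedBall o (2 * R) := by
  intro x hx
  have hxE : dist x o - R ≤ infDist x E := (le_infDist hne).2 fun e he => by
    linarith [dist_triangle x e o, mem_closedBall.1 (hE he)]
  have hxr : r * dist x o ≤ 1 / 2 * dist x o := by gcongr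
  rw [mem_closedBall]
  linarith [hxE.trans (le_trans hx hxr)]

theorem totallyBounded_iInf_conicalNhd {E : ℕ → Set M} {r : ℕ → ℝ}
    (hne : ∀ n, (E n).Nonempty) (hE : ∀ n, TotallyBounded (E n)) (hr : Tendsto r atTop (𝓝 0)) :
    (⨅ n, 𝓟 (conicalNhd o (r n) (E n))).TotallyBounded := by
  have hmem : ∀ n, conicalNhd o (r n) (E n) ∈ ⨅ n, 𝓟 (conicalNhd o (r n) (E n)) :=
    fun n => mem_iInf_of_mem n (mem_principal_self _)
  obtain ⟨m, hm⟩ := (hr.eventually_le_const one_half_pos).exists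
  obtain ⟨R, hR⟩ := (hE m).isBounded.subset_closedBall o
  refine uniformity_basis_dist.filter_totallyBounded_iff.2 fun ε hε => ?_
  have hlim : Tendsto (fun n => |r n| * (2 * R)) atTop (𝓝 0) := by
    simpa only [abs_zero, zero_mul] using hr.abs.mul_const (2 * R)
  obtain ⟨n, hn⟩ := (hlim.eventually_lt_const (half_pos hε)).exists
  obtain ⟨t, ht, hEt⟩ := Metric.totallyBounded_iff.1 (hE n) (ε / 2) (half_pos hε)
  refine ⟨t, ht, mem_of_superset (inter_mem (hmem m) (hmem n)) ?_⟩
  rintro x ⟨hxm, hxn⟩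
  have hxR : dist x o ≤ 2 * R := conicalNhd_subset_closedBall hm (hne m) hR hxm
  have hx : infDist x (E n) < ε / 2 :=
    calc infDist x (E n) ≤ r n * dist x o := hxn
      _ ≤ |r n| * (2 * R) := by gcongr; exact le_abs_self _
      _ < ε / 2 := hn
  obtain ⟨e, he, hxe⟩ := (infDist_lt_iff (hne n)).1 hx
  obtain ⟨y, hy, hey⟩ := mem_iUnion₂.1 (hEt he)
  exact ⟨y, hy, (dist_triangle x e y).trans_lt (by linarith [mem_ball.1 hey])⟩

-- Of two spikes that meet, each has its apex in the conical neighbourhood of the apex of the other.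
theorem dist_le_mul_dist_of_three_div_mul_dist_le {r : ℝ} (hr0 : 0 < r) (hr1 : r ≤ 1) {s t x : M}
    (hs : 3 / r * dist x s ≤ dist s o) (ht : 3 / r * dist x t ≤ dist t o) :
    dist s t ≤ r * dist s o := by
  rw [div_mul_eq_mul_div, div_le_iff₀' hr0] at hs ht
  have hst : dist s t ≤ dist x s + dist x t := dist_triangle_left s t x
  have hto : dist t o ≤ dist s t + dist s o := dist_triangle_left t o s
  have hrst : r * dist s t ≤ dist s t := mul_le_of_le_one_left dist_nonneg hr1
  have hrto : r * dist t o ≤ r * (dist s t + dist s o) := by gcongr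
  linarith

/-- The largest of the cones of height `g s` and slope `C` with apices over the points `s` of `S`,
and `0` where all of them have come down to zero. -/
def spikes (C : NNReal) (g : M → NNReal) (S : Finset M) (x : M) : NNReal :=
  S.sup fun s => g s - C * nndist x s

section Spikes

variable {C : NNReal} {g : M → NNReal} {S : Finset M}

theorem le_spikes_add {s : M} (hs : s ∈ S) (x : M) : g s ≤ spikes C g S x + C * nndist x s :=
  tsub_le_iff_right.1 (Finset.le_sup (f := fun s => g s - C * nndist x s) hs)

theorem lipschitzWith_spikes : LipschitzWith C fun x => (spikes C g S x : ℝ) := by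
  refine LipschitzWith.of_le_add_mul C fun x y => ?_
  have hle : spikes C g S x ≤ spikes C g S y + C * nndist x y :=
    Finset.sup_le fun s hs => tsub_le_iff_right.2 <|
      calc g s ≤ spikes C g S y + C * nndist y s := le_spikes_add hs y
        _ ≤ spikes C g S y + C * (nndist x y + nndist x s) := by
          gcongr
          exact nndist_triangle_left y s x
        _ = spikes C g S y + C * nndist x y + C * nndist x s := by ring
  exact_mod_cast hle

theorem spikes_le (hg : LipschitzWith C fun x => (g x : ℝ)) (x : M) : spikes C g S x ≤ g x := by
  refine Finset.sup_le fun s _ => tsub_le_iff_right.2 ?_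
  have hgs : (g s : ℝ) ≤ g x + C * dist s x := hg.le_add_mul s x
  rw [nndist_comm]
  exact_mod_cast hgs

theorem spikes_eq_of_mem (hg : LipschitzWith C fun x => (g x : ℝ)) {s : M} (hs : s ∈ S) :
    spikes C g S s = g s :=
  (spikes_le hg s).antisymm (by simpa using le_spikes_add (C := C) (g := g) hs s)

theorem exists_mul_nndist_lt_of_spikes_ne_zero {x : M} (hx : spikes C g S x ≠ 0) :
    ∃ s ∈ S, C * nndist x s < g s := by
  contrapose! hx
  exact bot_unique (Finset.sup_le fun s hs => (tsub_eq_zero_of_le (hx s hs)).le)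

end Spikes

section Cutoff

variable {E : Set M}

theorem infDist_div_dist_mul_dist (ho : o ∈ E) (x : M) :
    infDist x E / dist x o * dist x o = infDist x E :=
  div_mul_cancel_of_imp fun hx => le_antisymm (hx ▸ infDist_le_dist_of_mem ho) infDist_nonneg

theorem abs_infDist_div_dist_sub_mul_dist_le (ho : o ∈ E) (x y : M) :
    |infDist x E / dist x o - infDist y E / dist y o| * dist y o ≤ 2 * dist x y := by
  set q := fun z => infDist z E / dist z o
  have hq : ∀ z, q z * dist z o = infDist z E := infDist_div_dist_mul_dist ho
  have hq0 : 0 ≤ q x := div_nonneg infDist_nonneg dist_nonneg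
  have hq1 : q x ≤ 1 := div_le_one_of_le₀ (infDist_le_dist_of_mem ho) dist_nonneg
  calc |q x - q y| * dist y o
      = |(q x - q y) * dist y o| := by rw [abs_mul, abs_of_nonneg dist_nonneg]
    _ = |q x * (dist y o - dist x o) + (infDist x E - infDist y E)| := by
        rw [← hq x, ← hq y]
        ring_nf
    _ ≤ q x * |dist y o - dist x o| + |infDist x E - infDist y E| := by
        refine (abs_add_le _ _).trans_eq ?_
        rw [abs_mul, abs_of_nonneg hq0]
    _ ≤ 1 * dist x y + dist x y := by
        gcongr
        · rw [dist_comm x y]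
          exact abs_dist_sub_le y x o
        · exact (lipschitz_infDist_pt E).dist_le_mul x y |>.trans_eq (by simp)
    _ = 2 * dist x y := by ring

theorem exists_cutoff_conicalNhd (ho : o ∈ E) {r : ℝ} (hr : 0 < r) :
    ∃ h : M → ℝ, (∀ x, h x ∈ Icc 0 1) ∧ (∀ x ∈ conicalNhd o r E, h x = 1) ∧
      Function.support h ⊆ conicalNhd o (2 * r) E ∧
      ∀ x y, |h x - h y| * dist y o ≤ 2 / r * dist x y := by
  set q := fun x => infDist x E / dist x o
  set c : ℝ → ℝ := fun u => projIcc 0 1 zero_le_one u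
  have hc : ∀ u v, |c u - c v| ≤ |u - v| := fun u v =>
    ((LipschitzWith.projIcc zero_le_one).dist_le_mul u v).trans_eq
      (by rw [NNReal.coe_one, one_mul, Real.dist_eq])
  refine ⟨fun x => c (2 - q x / r), fun x => Subtype.coe_prop _, fun x hx => ?_, fun x hx => ?_,
    fun x y => ?_⟩
  · have hqr : q x / r ≤ 1 :=
      div_le_one_of_le₀ (div_le_of_le_mul₀ dist_nonneg hr.le hx) hr.le
    simp only [c, projIcc_of_right_le zero_le_one (by linarith : 1 ≤ 2 - q x / r)]
  · have hqr : q x < 2 * r := by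
      rw [← div_lt_iff₀ hr]
      by_contra! hqr
      exact hx (by simp only [c, projIcc_of_le_left zero_le_one (by linarith : 2 - q x / r ≤ 0)])
    calc infDist x E = q x * dist x o := (infDist_div_dist_mul_dist ho x).symm
      _ ≤ 2 * r * dist x o := by gcongr
  · calc |c (2 - q x / r) - c (2 - q y / r)| * dist y o
        ≤ |q x - q y| / r * dist y o := by
          refine mul_le_mul_of_nonneg_right ((hc _ _).trans_eq ?_) dist_nonneg
          rw [sub_sub_sub_cancel_left, ← sub_div, abs_div, abs_of_pos hr, abs_sub_comm]
      _ = |q x - q y| * dist y o / r := by ring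
      _ ≤ 2 * dist x y / r := by
          gcongr ?_ / r
          exact abs_infDist_div_dist_sub_mul_dist_le ho x y
      _ = 2 / r * dist x y := by ring

end Cutoff

end Metric

namespace IsLipschitzFree

variable {M : Type*} [MetricSpace M] {o : M} {F : Type*} [NormedAddCommGroup F]
  [NormedSpace ℝ F] {δ : M → F}

theorem ext (hδ : IsLipschitzFree o δ) {Y : Type*} [NormedAddCommGroup Y] [NormedSpace ℝ Y]
    {T U : F →L[ℝ] Y} (h : ∀ x, T (δ x) = U (δ x)) : T = U :=
  ContinuousLinearMap.ext_on hδ.dense_span (forall_mem_range.2 h)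

theorem norm_apply (hδ : IsLipschitzFree o δ) (x : M) : ‖δ x‖ = dist x o := by
  rw [← hδ.isometry.dist_eq, hδ.map_base, dist_zero_right]

theorem lipschitzWith_apply (hδ : IsLipschitzFree o δ) {C : NNReal} {φ : F →L[ℝ] ℝ}
    (hφ : ‖φ‖ ≤ C) : LipschitzWith C fun x => φ (δ x) := by
  simpa only [mul_one] using!
    (φ.lipschitz.weaken (show ‖φ‖₊ ≤ C from hφ)).comp hδ.isometry.lipschitz

theorem norm_le_of_lipschitzWith (hδ : IsLipschitzFree o δ) {C : NNReal} {φ : F →L[ℝ] ℝ}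
    (h : LipschitzWith C fun x => φ (δ x)) : ‖φ‖ ≤ C := by
  obtain ⟨ψ, hψ, hψφ⟩ := hδ.lift C _ h (by rw [hδ.map_base, map_zero])
  rwa [hδ.ext hψφ] at hψ

theorem exists_lift (hδ : IsLipschitzFree o δ) {Y : Type*} [NormedAddCommGroup Y]
    [NormedSpace ℝ Y] [CompleteSpace Y] {C : NNReal} {v : M → Y} (hv : LipschitzWith C v)
    (hvo : v o = 0) : ∃ T : F →L[ℝ] Y, ‖T‖ ≤ C ∧ ∀ x, T (δ x) = v x := by
  set A := Finsupp.linearCombination ℝ δ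
  set B := Finsupp.linearCombination ℝ v
  have hA : DenseRange A := by
    simpa only [← Finsupp.range_linearCombination] using! hδ.dense_span
  have hBA : ∀ a, ‖B a‖ ≤ C * ‖A a‖ := fun a => by
    refine NormedSpace.norm_le_dual_bound ℝ _ (by positivity) fun φ => ?_
    obtain ⟨ψ, hψ, hψv⟩ := hδ.lift (‖φ‖₊ * C) _ (φ.lipschitz.comp hv) (by simp [hvo])
    calc ‖φ (B a)‖ = ‖ψ (A a)‖ := by
          simp only [A, B, Finsupp.linearCombination_apply, map_finsuppSum, map_smul, hψv,
            Function.comp_apply]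
      _ ≤ (‖φ‖ * C) * ‖A a‖ := ψ.le_of_opNorm_le hψ _
      _ = C * ‖A a‖ * ‖φ‖ := by ring
  refine ⟨B.extendOfNorm A, LinearMap.opNorm_extendOfNorm_le hA C.2 hBA, fun x => ?_⟩
  simpa [A, B] using LinearMap.extendOfNorm_eq hA ⟨C, hBA⟩ (Finsupp.single x 1)

theorem exists_comp (hδ : IsLipschitzFree o δ) (φ : F →L[ℝ] ℝ) {g : ℝ → ℝ}
    (hg : LipschitzWith 1 g) (hg0 : g 0 = 0) :
    ∃ ψ : F →L[ℝ] ℝ, ‖ψ‖ ≤ ‖φ‖ ∧ ∀ x, ψ (δ x) = g (φ (δ x)) := by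
  refine hδ.lift ‖φ‖₊ _ ?_ (by rw [hδ.map_base, map_zero, hg0])
  simpa only [one_mul] using! hg.comp (hδ.lipschitzWith_apply (φ := φ) le_rfl)

theorem isWUC_of_disjoint_support (hδ : IsLipschitzFree o δ) {C : NNReal} {ψ : ℕ → F →L[ℝ] ℝ}
    (hψ : ∀ n, ‖ψ n‖ ≤ C)
    (hd : Pairwise fun m n =>
      Disjoint (Function.support fun x => ψ m (δ x)) (Function.support fun x => ψ n (δ x))) :
    IsWUC ψ := by
  refine isWUC_of_forall_norm_sum_le (C := (2 * C : NNReal)) fun ε A => ?_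
  have hε : ∀ n, ‖(ε n : ℝ) • ψ n‖ ≤ C := fun n => by
    rw [norm_smul]
    refine (mul_le_of_le_one_left (norm_nonneg _) ?_).trans (hψ n)
    cases ε n <;> simp
  have hsupp : ∀ n, (Function.support fun x => ((ε n : ℝ) • ψ n) (δ x)) ⊆
      Function.support fun x => ψ n (δ x) := fun n x hx hψx =>
    hx (mul_eq_zero_of_right (ε n : ℝ) hψx)
  refine hδ.norm_le_of_lipschitzWith ?_
  simpa only [sum_apply] using lipschitzWith_sum_of_disjoint_support
    (fun n => hδ.lipschitzWith_apply (hε n))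
    (fun m n hmn => (hd hmn).mono (hsupp m) (hsupp n)) A

-- `φ` and its spikes over the support of a finitely supported approximation of `μ` agree at that
-- approximation, so passing to the spikes shrinks the support of `φ` at little cost at `μ`.
theorem exists_spike_functional (hδ : IsLipschitzFree o δ) {C : NNReal} {φ : F →L[ℝ] ℝ}
    (hφ : ‖φ‖ ≤ C) (hφ0 : ∀ x, 0 ≤ φ (δ x)) (μ : F) {ε : ℝ} (hε : 0 < ε) :
    ∃ (S : Finset M) (ψ : F →L[ℝ] ℝ), ‖ψ‖ ≤ C ∧ |φ μ - ψ μ| ≤ ε ∧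
      ∀ x, ψ (δ x) ≠ 0 → ∃ s ∈ S, C * dist x s < φ (δ s) := by
  obtain ⟨ν, hν, hμν⟩ := hδ.dense_span.exists_dist_lt μ (ε := ε / (2 * (C + 1))) (by positivity)
  obtain ⟨a, rfl⟩ := Finsupp.mem_span_range_iff_exists_finsupp.1 hν
  set g : M → NNReal := fun x => ⟨φ (δ x), hφ0 x⟩
  have hg : LipschitzWith C fun x => (g x : ℝ) := hδ.lipschitzWith_apply hφ
  have hgo : g o = 0 := NNReal.eq (show φ (δ o) = 0 by rw [hδ.map_base, map_zero])
  obtain ⟨ψ, hψ, hψg⟩ := hδ.lift C (fun x => spikes C g a.support x) lipschitzWith_spikes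
    (NNReal.coe_eq_zero.2 (nonpos_iff_eq_zero.1 ((spikes_le hg o).trans_eq hgo)))
  have hψν : (φ - ψ) (a.sum fun x c => c • δ x) = 0 := by
    rw [map_finsuppSum]
    refine Finset.sum_eq_zero fun s hs => ?_
    beta_reduce
    have hs0 : (φ - ψ) (δ s) = 0 := by
      rw [_root_.sub_apply, hψg, spikes_eq_of_mem hg hs]
      exact sub_self _
    rw [map_smul, hs0, smul_zero]
  refine ⟨a.support, ψ, hψ, ?_, fun x hx => ?_⟩
  · calc |φ μ - ψ μ| = |(φ - ψ) (μ - a.sum fun x c => c • δ x)| := by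
          rw [map_sub, hψν, sub_zero, _root_.sub_apply]
      _ ≤ (C + C) * (ε / (2 * (C + 1))) := by
          refine (φ - ψ).le_of_opNorm_le_of_le ((norm_sub_le _ _).trans (add_le_add hφ hψ)) ?_
          rw [← dist_eq_norm]
          exact hμν.le
      _ ≤ (2 * (C + 1)) * (ε / (2 * (C + 1))) := by
          gcongr
          linarith
      _ = ε := mul_div_cancel₀ _ (by positivity)
  · rw [hψg, NNReal.coe_ne_zero] at hx
    obtain ⟨s, hs, hsx⟩ := exists_mul_nndist_lt_of_spikes_ne_zero hx
    exact ⟨s, hs, by exact_mod_cast hsx⟩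

theorem exists_nonneg_functional_of_lt_abs (hδ : IsLipschitzFree o δ) (φ : F →L[ℝ] ℝ) {μ : F}
    {η : ℝ} (hη : η < |φ μ|) :
    ∃ χ : F →L[ℝ] ℝ, ‖χ‖ ≤ ‖φ‖ ∧ (∀ x, 0 ≤ χ (δ x)) ∧ (∀ x, φ (δ x) = 0 → χ (δ x) = 0) ∧
      η / 2 < |χ μ| := by
  obtain ⟨p, hp, hpφ⟩ := hδ.exists_comp φ (LipschitzWith.id.max_const 0) (max_self 0)
  obtain ⟨n, hn, hnφ⟩ := hδ.exists_comp (-φ) (LipschitzWith.id.max_const 0) (max_self 0)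
  simp only [id, neg_apply, norm_neg] at hpφ hn hnφ
  have hpn : φ = p - n := hδ.ext fun x => by
    rw [_root_.sub_apply, hpφ, hnφ, max_zero_sub_max_neg_zero_eq_self]
  rcases lt_or_ge (η / 2) |p μ| with h | h
  · exact ⟨p, hp, fun x => hpφ x ▸ le_max_right _ _, fun x hx => by rw [hpφ, hx, max_self], h⟩
  · refine ⟨n, hn, fun x => hnφ x ▸ le_max_right _ _,
      fun x hx => by rw [hnφ, hx, neg_zero, max_self], ?_⟩
    rw [hpn, _root_.sub_apply] at hη
    linarith [abs_sub (p μ) (n μ)]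

theorem exists_spike_functional_of_lt_abs (hδ : IsLipschitzFree o δ) {C : NNReal} (hC : 1 ≤ C)
    {φ : F →L[ℝ] ℝ} (hφ : ‖φ‖ ≤ 1) {μ : F} {η : ℝ} (hη : 0 < η) (hφμ : η < |φ μ|) :
    ∃ (S : Finset M) (ψ : F →L[ℝ] ℝ), ‖ψ‖ ≤ C ∧ η / 4 < |ψ μ| ∧
      ∀ x, ψ (δ x) ≠ 0 → ∃ s ∈ S, φ (δ s) ≠ 0 ∧ C * dist x s ≤ dist s o := by
  obtain ⟨χ, hχφ, hχ0, hφχ, hχμ⟩ := hδ.exists_nonneg_functional_of_lt_abs φ hφμ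
  have hχ : ‖χ‖ ≤ 1 := hχφ.trans hφ
  obtain ⟨S, ψ, hψ, hχψ, hS⟩ :=
    hδ.exists_spike_functional (hχ.trans (by exact_mod_cast hC)) hχ0 μ (ε := η / 4) (by positivity)
  refine ⟨S, ψ, hψ, ?_, fun x hx => ?_⟩
  · linarith [abs_sub_abs_le_abs_sub (χ μ) (ψ μ)]
  · obtain ⟨s, hs, hxs⟩ := hS x hx
    have hpos : 0 < χ (δ s) := (mul_nonneg C.2 dist_nonneg).trans_lt hxs
    refine ⟨s, hs, fun h => hpos.ne' (hφχ s h), hxs.le.trans ?_⟩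
    calc χ (δ s) ≤ ‖χ (δ s)‖ := le_abs_self _
      _ ≤ 1 * ‖δ s‖ := χ.le_of_opNorm_le hχ _
      _ = dist s o := by rw [one_mul, hδ.norm_apply]

theorem exists_finset_abs_le_of_eq_zero_conicalNhd (hδ : IsLipschitzFree o δ) {Γ : Set F}
    (hΓ : IsVStarSet Γ) {η : ℝ} (hη : 0 < η) {r : ℝ} (hr : 0 < r) (hr1 : r ≤ 1) :
    ∃ E : Finset M, o ∈ E ∧ ∀ φ : F →L[ℝ] ℝ, ‖φ‖ ≤ 1 →
      (∀ x ∈ conicalNhd o r (E : Set M), φ (δ x) = 0) → ∀ μ ∈ Γ, |φ μ| ≤ η := by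
  classical
  by_contra! hcon
  set C : NNReal := ⟨3 / r, by positivity⟩
  have hC : 1 ≤ C := (one_le_div hr).2 (by linarith)
  obtain ⟨ψ, hψ, hd⟩ := exists_seq_of_forall_finset_exists'
    (fun ψ : F →L[ℝ] ℝ => ‖ψ‖ ≤ C ∧ (∃ μ ∈ Γ, η / 4 < |ψ μ|) ∧
      ∃ S : Finset M, ∀ x, ψ (δ x) ≠ 0 → ∃ s ∈ S, 3 / r * dist x s ≤ dist s o)
    (fun ψ χ => Disjoint (Function.support fun x => ψ (δ x)) (Function.support fun x => χ (δ x)))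
    (fun Ψ hΨ => by
      choose! S hS using fun ψ hψ => (hΨ ψ hψ).2.2
      obtain ⟨φ, hφ, hφE, μ, hμ, hφμ⟩ :=
        hcon (insert o (Ψ.biUnion S)) (Finset.mem_insert_self _ _)
      obtain ⟨S', ψ, hψ, hψμ, hS'⟩ := hδ.exists_spike_functional_of_lt_abs hC hφ hη hφμ
      refine ⟨ψ, ⟨hψ, ⟨μ, hμ, hψμ⟩, S', fun x hx => ?_⟩, fun χ hχ => ?_⟩
      · obtain ⟨s, hs, -, hxs⟩ := hS' x hx
        exact ⟨s, hs, hxs⟩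
      · refine Set.disjoint_left.2 fun x hχx hψx => ?_
        obtain ⟨t, ht, hxt⟩ := hS χ hχ x hχx
        obtain ⟨s, -, hφs, hxs⟩ := hS' x hψx
        have htE : t ∈ insert o (Ψ.biUnion S) :=
          Finset.mem_insert_of_mem (Finset.mem_biUnion.2 ⟨χ, hχ, ht⟩)
        exact hφs (hφE s ((infDist_le_dist_of_mem (Finset.mem_coe.2 htE)).trans
          (dist_le_mul_dist_of_three_div_mul_dist_le hr hr1 hxs hxt))))
  have hWUC : IsWUC ψ := hδ.isWUC_of_disjoint_support (fun n => (hψ n).1) hd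
  obtain ⟨n, hn⟩ := (hΓ ψ hWUC (η / 4) (by positivity)).exists
  obtain ⟨μ, hμ, hnμ⟩ := (hψ n).2.1
  exact hnμ.not_ge (hn μ hμ)

end IsLipschitzFree

section Multiplier

variable {M : Type*} {F : Type*} [NormedAddCommGroup F] [NormedSpace ℝ F]
  {δ : M → F} {A B : Set M} {T U : F →L[ℝ] F}

/-- `T` acts on `F(M)` as the pointwise multiplication by a function supported in `A`: the adjoint
of `f ↦ h * f`, where `h` vanishes outside `A`. -/
def IsMultiplierOn (δ : M → F) (A : Set M) (T : F →L[ℝ] F) : Prop :=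
  ∃ h : M → ℝ, Function.support h ⊆ A ∧ ∀ x, T (δ x) = h x • δ x

theorem isMultiplierOn_univ_id : IsMultiplierOn δ univ (ContinuousLinearMap.id ℝ F) :=
  ⟨1, subset_univ _, fun x => (one_smul ℝ (δ x)).symm⟩

theorem IsMultiplierOn.comp (hT : IsMultiplierOn δ A T) (hU : IsMultiplierOn δ B U) :
    IsMultiplierOn δ (A ∩ B) (T.comp U) := by
  obtain ⟨h, hA, hT⟩ := hT
  obtain ⟨k, hB, hU⟩ := hU
  refine ⟨fun x => k x * h x, ?_, fun x => ?_⟩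
  · rw [Function.support_mul, inter_comm A]
    exact inter_subset_inter hB hA
  · rw [ContinuousLinearMap.comp_apply, hU, map_smul, hT, smul_smul]

end Multiplier

namespace IsLipschitzFree

variable {M : Type*} [MetricSpace M] {o : M} {F : Type*} [NormedAddCommGroup F]
  [NormedSpace ℝ F] {δ : M → F}

theorem apply_eq_of_isMultiplierOn (hδ : IsLipschitzFree o δ) {A : Set M} {T : F →L[ℝ] F}
    (hT : IsMultiplierOn δ A T) {φ ψ : F →L[ℝ] ℝ} (h : ∀ x ∈ A, φ (δ x) = ψ (δ x)) (μ : F) :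
    φ (T μ) = ψ (T μ) := by
  obtain ⟨w, hw, hTw⟩ := hT
  have hcomp : φ.comp T = ψ.comp T := hδ.ext fun x => by
    simp only [ContinuousLinearMap.comp_apply, hTw, map_smul]
    by_cases hx : w x = 0
    · rw [hx, zero_smul, zero_smul]
    · rw [h x (hw hx)]
  exact DFunLike.congr_fun hcomp μ

theorem exists_truncation (hδ : IsLipschitzFree o δ) (φ : F →L[ℝ] ℝ) :
    ∃ ψ : ℕ → F →L[ℝ] ℝ, (∀ (n : ℕ) x, |φ (δ x)| < 1 / ((n : ℝ) + 1) → ψ n (δ x) = φ (δ x)) ∧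
      ∀ μ, Tendsto (fun n => ψ n μ) atTop (𝓝 0) := by
  set c : ℕ → ℝ := fun n => 1 / ((n : ℝ) + 1)
  have hc0 : ∀ n, 0 ≤ c n := fun n => by positivity
  have hc : Tendsto c atTop (𝓝 0) := tendsto_one_div_add_atTop_nhds_zero_nat
  choose ψ hψ hψφ using fun n => hδ.exists_comp φ
    ((LipschitzWith.id.min_const (c n)).max_const (-c n)) (by simp [hc0])
  simp only [id] at hψφ
  refine ⟨ψ, fun n x hx => ?_, fun μ => ?_⟩
  · rw [hψφ, min_eq_left (abs_lt.1 hx).2.le, max_eq_left (abs_lt.1 hx).1.le]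
  · refine tendsto_apply_of_dense_span (T₀ := 0) (C := ‖φ‖₊) hψ hδ.dense_span
      (forall_mem_range.2 fun x => ?_) μ
    refine squeeze_zero_norm (fun n => ?_) hc
    rw [hψφ, Real.norm_eq_abs, abs_le]
    exact ⟨le_max_right _ _, max_le (min_le_right _ _) (neg_le_self (hc0 n))⟩

theorem mem_freeSpan_of_tendsto (hδ : IsLipschitzFree o δ) {ι : Type*} {l : Filter ι} [l.NeBot]
    {K : Set M} {A : ι → Set M} (hA : Tendsto A l (𝓝ˢ K).smallSets) {U : ι → F →L[ℝ] F}
    (hU : ∀ i, IsMultiplierOn δ (A i) (U i)) {μ ν : F}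
    (hν : Tendsto (fun i => U i μ) l (𝓝 ν)) : ν ∈ freeSpan δ K := by
  refine mem_topologicalClosure_span_of_forall_dual fun φ hφ => ?_
  obtain ⟨ψ, hψφ, hψ⟩ := hδ.exists_truncation φ
  have heq : ∀ n, φ ν = ψ n ν := fun n => by
    have hopen : IsOpen {x | |φ (δ x)| < 1 / ((n : ℝ) + 1)} :=
      isOpen_lt (φ.continuous.comp hδ.isometry.continuous).abs continuous_const
    have hK : {x | |φ (δ x)| < 1 / ((n : ℝ) + 1)} ∈ 𝓝ˢ K := hopen.mem_nhdsSet.2 fun x hx => by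
      rw [mem_ofPred_eq, hφ _ (mem_image_of_mem δ hx), abs_zero]
      positivity
    refine tendsto_nhds_unique_of_eventuallyEq ((φ.continuous.tendsto ν).comp hν)
      (((ψ n).continuous.tendsto ν).comp hν) ?_
    filter_upwards [tendsto_smallSets_iff.1 hA _ hK] with i hi
    exact hδ.apply_eq_of_isMultiplierOn (hU i) (fun x hx => (hψφ n x (hi hx)).symm) μ
  exact tendsto_nhds_unique (tendsto_const_nhds.congr heq) (hψ ν)

theorem norm_smul_sub_smul_le (hδ : IsLipschitzFree o δ) {h : M → ℝ} {D : ℝ}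
    (h01 : ∀ x, h x ∈ Icc 0 1) (hD : ∀ x y, |h x - h y| * dist y o ≤ D * dist x y) (x y : M) :
    ‖h x • δ x - h y • δ y‖ ≤ (1 + D) * dist x y :=
  calc ‖h x • δ x - h y • δ y‖ = ‖h x • (δ x - δ y) + (h x - h y) • δ y‖ := by
        rw [smul_sub, sub_smul, sub_add_sub_cancel]
    _ ≤ h x * dist x y + |h x - h y| * dist y o := by
        refine (norm_add_le _ _).trans_eq ?_
        rw [norm_smul, norm_smul, ← dist_eq_norm, hδ.isometry.dist_eq, hδ.norm_apply,
          Real.norm_eq_abs, Real.norm_eq_abs, abs_of_nonneg (h01 x).1]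
    _ ≤ 1 * dist x y + D * dist x y :=
        add_le_add (mul_le_mul_of_nonneg_right (h01 x).2 dist_nonneg) (hD x y)
    _ = (1 + D) * dist x y := (add_mul _ _ _).symm

variable [CompleteSpace F]

theorem exists_isMultiplierOn_conicalNhd (hδ : IsLipschitzFree o δ) {E : Set M} (ho : o ∈ E)
    {r : ℝ} (hr : 0 < r) :
    ∃ T : F →L[ℝ] F, IsMultiplierOn δ (conicalNhd o (2 * r) E) T ∧ ‖T‖ ≤ 1 + 2 / r ∧
      ∀ x ∈ conicalNhd o r E, T (δ x) = δ x := by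
  obtain ⟨h, h01, h1, hsupp, hlip⟩ := exists_cutoff_conicalNhd ho hr
  obtain ⟨T, hT, hTh⟩ := hδ.exists_lift (C := ⟨1 + 2 / r, by positivity⟩)
    (v := fun x => h x • δ x)
    (LipschitzWith.of_dist_le_mul fun x y =>
      (dist_eq_norm _ _).trans_le (hδ.norm_smul_sub_smul_le h01 hlip x y))
    (by rw [hδ.map_base, smul_zero])
  exact ⟨T, ⟨h, hsupp, hTh⟩, hT, fun x hx => by rw [hTh, h1 x hx, one_smul]⟩

theorem exists_isMultiplierOn_norm_sub_le (hδ : IsLipschitzFree o δ) {Γ : Set F}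
    (hΓ : IsVStarSet Γ) {r : ℝ} (hr : 0 < r) (hr1 : r ≤ 1) {ε : ℝ} (hε : 0 < ε) :
    ∃ (E : Finset M) (T : F →L[ℝ] F), o ∈ E ∧ IsMultiplierOn δ (conicalNhd o (2 * r) E) T ∧
      ∀ μ ∈ Γ, ‖μ - T μ‖ ≤ ε := by
  set D := 1 + (1 + 2 / r)
  have hD : 0 < D := by positivity
  obtain ⟨E, ho, hE⟩ :=
    hδ.exists_finset_abs_le_of_eq_zero_conicalNhd hΓ (div_pos hε hD) hr hr1
  obtain ⟨T, hT, hTD, hTE⟩ := hδ.exists_isMultiplierOn_conicalNhd (Finset.mem_coe.2 ho) hr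
  refine ⟨E, T, ho, hT, fun μ hμ => ?_⟩
  set R : F →L[ℝ] F := ContinuousLinearMap.id ℝ F - T
  have hR : ‖R‖ ≤ D :=
    (norm_sub_le _ _).trans (add_le_add ContinuousLinearMap.norm_id_le hTD)
  obtain ⟨φ, hφ, hφμ⟩ := exists_dual_vector'' ℝ (R μ)
  have hφR : ‖D⁻¹ • φ.comp R‖ ≤ 1 := by
    rw [norm_smul, Real.norm_of_nonneg (by positivity)]
    refine inv_mul_le_one_of_le₀ ((φ.opNorm_comp_le R).trans ?_) hD.le
    exact (mul_le_of_le_one_left (norm_nonneg R) hφ).trans hR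
  have hφE : ∀ x ∈ conicalNhd o r (E : Set M), (D⁻¹ • φ.comp R) (δ x) = 0 := fun x hx => by
    simp [R, hTE x hx]
  calc ‖μ - T μ‖ = D * |(D⁻¹ • φ.comp R) μ| := by
        rw [_root_.smul_apply, ContinuousLinearMap.comp_apply, hφμ, smul_eq_mul, abs_mul,
          abs_of_pos (inv_pos.2 hD), mul_inv_cancel_left₀ hD.ne']
        exact (abs_norm _).symm
    _ ≤ D * (ε / D) := by
        gcongr
        exact hE _ hφR hφE μ hμ
    _ = ε := mul_div_cancel₀ ε hD.ne'

theorem exists_seq_isMultiplierOn (hδ : IsLipschitzFree o δ) {Γ : Set F} (hΓ : IsVStarSet Γ)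
    {r : ℕ → ℝ} (hr : ∀ n, r n ∈ Ioc 0 1) {ε : ℝ} (hε : 0 < ε) :
    ∃ (E : ℕ → Finset M) (U : ℕ → F →L[ℝ] F), (∀ n, o ∈ E n) ∧
      (∀ n, IsMultiplierOn δ (⋂ j < n, conicalNhd o (2 * r j) (E j)) (U n)) ∧
      U 0 = ContinuousLinearMap.id ℝ F ∧
      ∀ n, ∀ μ ∈ Γ, dist (U n μ) (U (n + 1) μ) ≤ ε / 2 / 2 ^ n := by
  choose E T hE hT hTΓ using fun (n : ℕ) (U : F →L[ℝ] F) =>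
    hδ.exists_isMultiplierOn_norm_sub_le (hΓ.image U) (hr n).1 (hr n).2
      (ε := ε / 2 / 2 ^ n) (by positivity)
  set U : ℕ → F →L[ℝ] F := fun n =>
    Nat.rec (ContinuousLinearMap.id ℝ F) (fun n V => (T n V).comp V) n
  refine ⟨fun n => E n (U n), U, fun n => hE n (U n), fun n => ?_, rfl, fun n μ hμ => ?_⟩
  · induction n with
    | zero => simpa using! isMultiplierOn_univ_id
    | succ n ih =>
      rw [biInter_lt_succ, inter_comm]
      exact (hT n (U n)).comp ih
  · rw [dist_eq_norm]
    exact hTΓ n (U n) _ (mem_image_of_mem _ hμ)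

theorem exists_isCompact_forall_approx [CompleteSpace M] (hδ : IsLipschitzFree o δ) {Γ : Set F}
    (hΓ : IsVStarSet Γ) {ε : ℝ} (hε : 0 < ε) :
    ∃ K : Set M, IsCompact K ∧ ∃ Δ : Set F, IsVStarSet Δ ∧ Δ ⊆ freeSpan δ K ∧
      ∀ μ ∈ Γ, ∃ ν ∈ Δ, ‖μ - ν‖ ≤ ε := by
  set r : ℕ → ℝ := fun n => 1 / ((n : ℝ) + 1)
  have hr : ∀ n, r n ∈ Ioc 0 1 := fun n =>
    ⟨Nat.one_div_pos_of_nat, div_le_one_of_le₀ (by simp) (by positivity)⟩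
  have hr0 : Tendsto (fun n => 2 * r n) atTop (𝓝 0) := by
    simpa only [mul_zero] using tendsto_one_div_add_atTop_nhds_zero_nat.const_mul (2 : ℝ)
  obtain ⟨E, U, hoE, hU, hU0, hdist⟩ := hδ.exists_seq_isMultiplierOn hΓ hr hε
  have hclosed : ∀ n, IsClosed (conicalNhd o (2 * r n) (E n : Set M)) := fun n =>
    isClosed_conicalNhd o _ _
  have htb : (⨅ n, 𝓟 (conicalNhd o (2 * r n) (E n : Set M))).TotallyBounded :=
    totallyBounded_iInf_conicalNhd (fun n => ⟨o, hoE n⟩)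
      (fun n => (E n).finite_toSet.totallyBounded) hr0
  choose! S hS using fun μ hμ => cauchySeq_tendsto_of_complete
    (cauchySeq_of_le_geometric_two fun n => hdist n μ hμ)
  refine ⟨_, isCompact_iInter_of_totallyBounded_iInf_principal hclosed htb, S '' Γ,
    hΓ.image_of_tendstoUniformlyOn (tendstoUniformlyOn_of_le_geometric_two hdist hS),
    forall_mem_image.2 fun μ hμ => ?_,
    fun μ hμ => ⟨S μ, mem_image_of_mem S hμ, ?_⟩⟩
  · exact hδ.mem_freeSpan_of_tendsto
      (tendsto_biInter_smallSets (iInf_principal_le_nhdsSet_iInter hclosed htb)) hU (hS μ hμ)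
  · simpa only [hU0, ContinuousLinearMap.id_apply, dist_eq_norm] using
      dist_le_of_le_geometric_two_of_tendsto₀ (fun n => hdist n μ hμ) (hS μ hμ)

theorem exists_projection_freeSpan (hδ : IsLipschitzFree o δ) {π : M → M} {C : NNReal}
    (hπ : LipschitzWith C π) (hπo : π o = o) {S K : Set M} (hS : range π ⊆ S)
    (hK : ∀ x ∈ K, π x = x) :
    ∃ P : F →L[ℝ] freeSpan δ S, ∀ μ ∈ freeSpan δ K, (P μ : F) = μ := by
  have : CompleteSpace (freeSpan δ S) :=
    (Submodule.isClosed_topologicalClosure _).completeSpace_coe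
  obtain ⟨P, -, hP⟩ := hδ.exists_lift (C := C)
    (v := fun x => (⟨δ (π x), mem_freeSpan δ (hS (mem_range_self x))⟩ : freeSpan δ S))
    (LipschitzWith.of_dist_le_mul fun x y => by
      rw [Subtype.dist_eq, hδ.isometry.dist_eq]
      exact hπ.dist_le_mul x y)
    (Subtype.ext (show δ (π o) = 0 by rw [hπo, hδ.map_base]))
  refine ⟨P, fun μ hμ => ?_⟩
  have heq : EqOn ((freeSpan δ S).subtypeL.comp P) (ContinuousLinearMap.id ℝ F) (δ '' K) :=
    forall_mem_image.2 fun x hx => by simp [hP, hK x hx]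
  exact ContinuousLinearMap.eqOn_closure_span heq hμ

end IsLipschitzFree

theorem propertyVStar_compactlyDetermined_of_compactRetracts_general
    {M : Type*} [MetricSpace M] [CompleteSpace M] (o : M)
    {F : Type*} [NormedAddCommGroup F] [NormedSpace ℝ F] [CompleteSpace F]
    (δ : M → F) (hδ : IsLipschitzFree o δ)
    (hret : ∀ K : Set M, IsCompact K → ∃ L : Set M, IsCompact L ∧
      ∃ π : M → M, (∃ C : NNReal, LipschitzWith C π) ∧ Set.range π ⊆ L ∧
        ∀ x ∈ K, π x = x)
    (hcpt : ∀ K : Set M, IsCompact K → HasPropertyVStar ↥(freeSpan δ (K ∪ {o}))) :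
    HasPropertyVStar F := by
  intro Γ hΓ
  refine relWeaklyCompact_of_forall_approx fun ε hε => ?_
  obtain ⟨K, hK, Δ, hΔ, hΔK, hΓΔ⟩ := hδ.exists_isCompact_forall_approx hΓ hε
  obtain ⟨L, hL, π, ⟨C, hπ⟩, hπL, hπK⟩ := hret (K ∪ {o}) (hK.union isCompact_singleton)
  obtain ⟨P, hP⟩ := hδ.exists_projection_freeSpan hπ (hπK o (Or.inr rfl))
    (hπL.trans subset_union_left) fun x hx => hπK x (Or.inl hx)
  have hPΔ : RelWeaklyCompact (P '' Δ) := hcpt L hL _ (hΔ.image P)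
  refine ⟨_, hPΔ.image (freeSpan δ (L ∪ {o})).subtypeL, fun μ hμ => ?_⟩
  obtain ⟨ν, hν, hμν⟩ := hΓΔ μ hμ
  exact ⟨ν, ⟨P ν, mem_image_of_mem P hν, hP ν (hΔK hν)⟩, hμν⟩

/-- Suppose that every compact subset of `M` is contained in a compact Lipschitz retract
of `M`.  Then property (V*) is compactly determined for `F(M)`: if `F(K ∪ {0})` has
property (V*) for every compact `K ⊆ M`, then `F(M)` has property (V*). -/
theorem propertyVStar_compactlyDetermined_of_compactRetracts
    {M : Type*} [MetricSpace M] [CompleteSpace M] (o : M)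
    {F : Type*} [NormedAddCommGroup F] [NormedSpace ℝ F] [CompleteSpace F]
    (δ : M → F) (hδ : IsLipschitzFree o δ)
    (hret : ∀ K : Set M, IsCompact K → ∃ L : Set M, IsCompact L ∧ K ⊆ L ∧
      ∃ π : M → M, (∃ C : NNReal, LipschitzWith C π) ∧ Set.range π ⊆ L ∧
        ∀ x ∈ L, π x = x)
    (hcpt : ∀ K : Set M, IsCompact K → HasPropertyVStar ↥(freeSpan δ (K ∪ {o}))) :
    HasPropertyVStar F :=
  propertyVStar_compactlyDetermined_of_compactRetracts_general o δ hδ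
    (fun K hK =>
      let ⟨L, hL, hKL, π, hπ, hπL, hπid⟩ := hret K hK
      ⟨L, hL, π, hπ, hπL, fun x hx => hπid x (hKL hx)⟩)
    hcpt
end
end

section
/- Let (G, d_cc) be a Carnot–Carathéodory metric space satisfying condition (◇) with exponent α, defined by vector fields X = (X_1,…,X_s), and let x₀ ∈ G. Then there exist a compact d_cc-neighborhood K ⊂ G of x₀, an open connected set Ω ⊂ G with Γ_K ⊂ Ω, and a constant β > 0 such that for every d_cc-Lipschitz function f : G → ℝ and every ε > 0 there exists g : Ω → ℝ satisfying: (i) g is C^∞ on Ω with respect to the Euclidean structure; (ii) sup_{x∈Γ_K} |f(x) − g(x)| < ε; (iii) sup_{x∈Γ_K} ‖X(g)(x)‖_{ℓ₂^s} ≤ Lip(f); (iv) g(x₀) = f(x₀); (v) |g(x) − g(y)| ≤ Lip(f)·β·‖x−y‖₂^α for all x ≠ y ∈ Γ_K. In particular, the restriction of g to K is d_cc-Lipschitz with Lipschitz constant at most Lip(f). -/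
open Filter Topology Metric Set

noncomputable section

/-- Euclidean space `ℝ^d`. -/
abbrev Euc (d : ℕ) := EuclideanSpace ℝ (Fin d)

/-- The data of a Carnot–Carathéodory space: an open connected set `G ⊆ ℝ^d` together
with a family `X = (X₁, …, X_s)` of vector fields on `G` with locally Lipschitz
coefficients. -/
structure CCData (d s : ℕ) where
  /-- the underlying open connected subset of `ℝ^d` -/
  G : Set (Euc d)
  /-- the family of vector fields -/
  X : Fin s → Euc d → Euc d
  isOpen_G : IsOpen G
  isConnected_G : IsConnected G
  locallyLipschitz_X : ∀ j : Fin s, ∀ x ∈ G, ∃ U ∈ 𝓝 x, ∃ K : NNReal,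
    LipschitzOnWith K (X j) U

/-- A curve `γ` on `[0, b]` is admissible (w.r.t. the vector fields of `S`) if it stays
in `G`, and it is absolutely continuous with derivative `γ'(t) = ∑ⱼ cⱼ(t) Xⱼ(γ(t))`
a.e., for Borel functions `cⱼ` with `∑ⱼ cⱼ(t)² ≤ 1`.  (Absolute continuity is expressed
by `γ` being the indefinite integral of an integrable function.) -/
def CCData.Admissible {d s : ℕ} (S : CCData d s) (b : ℝ) (γ : ℝ → Euc d) : Prop :=
  0 ≤ b ∧ (∀ t ∈ Set.Icc (0 : ℝ) b, γ t ∈ S.G) ∧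
  ∃ c : Fin s → ℝ → ℝ,
    (∀ j, Measurable (c j)) ∧
    (∀ t ∈ Set.Icc (0 : ℝ) b, ∑ j, (c j t) ^ 2 ≤ 1) ∧
    MeasureTheory.IntegrableOn (fun t => ∑ j, c j t • S.X j (γ t)) (Set.Icc (0 : ℝ) b) ∧
    ∀ t ∈ Set.Icc (0 : ℝ) b, γ t = γ 0 + ∫ u in (0 : ℝ)..t, ∑ j, c j u • S.X j (γ u)

/-- The Carnot–Carathéodory distance associated with the vector fields of `S`:
the infimum of `b ≥ 0` such that an admissible curve joins `x` to `y` in time `b`. -/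
def CCData.ccDist {d s : ℕ} (S : CCData d s) (x y : Euc d) : ℝ :=
  sInf {b | ∃ γ : ℝ → Euc d, S.Admissible b γ ∧ γ 0 = x ∧ γ b = y}

/-- Every two points of `G` are joined by an admissible curve, so that `d_cc` is
finite everywhere (`(G, d_cc)` is a Carnot–Carathéodory metric space). -/
def CCData.Connects {d s : ℕ} (S : CCData d s) : Prop :=
  ∀ x ∈ S.G, ∀ y ∈ S.G, ∃ b γ, S.Admissible b γ ∧ γ 0 = x ∧ γ b = y

/-- Condition (◇) with exponent `α`: for every bounded `K ⊆ G` there are constants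
`C₁, C₂ > 0` with `C₁‖x − y‖₂ ≤ d_cc(x, y) ≤ C₂‖x − y‖₂^α` for all `x, y ∈ K`. -/
def CCData.Diamond {d s : ℕ} (S : CCData d s) (α : ℝ) : Prop :=
  ∀ K : Set (Euc d), K ⊆ S.G → Bornology.IsBounded K →
    ∃ C₁ > (0 : ℝ), ∃ C₂ > (0 : ℝ), ∀ x ∈ K, ∀ y ∈ K,
      C₁ * ‖x - y‖ ≤ S.ccDist x y ∧ S.ccDist x y ≤ C₂ * ‖x - y‖ ^ α

/-- The pointed metric space `M` is (a realization of) the metric space `(G, d_cc)`: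
`ι` is a bijection of `M` onto `G` and the metric of `M` corresponds to `d_cc`. -/
structure CCRepresentation {d s : ℕ} (S : CCData d s) (M : Type*) [MetricSpace M]
    (ι : M → Euc d) : Prop where
  injective : Function.Injective ι
  range_eq : Set.range ι = S.G
  dist_eq : ∀ x y : M, dist x y = S.ccDist (ι x) (ι y)

/-- `γ` is a geodesic curve joining `p` and `q`: an isometric embedding of
`[0, d(p,q)]` with `γ(0) = p` and `γ(d(p,q)) = q`. -/
def IsGeodesicCurve {M : Type*} [MetricSpace M] (p q : M) (γ : ℝ → M) : Prop :=
  γ 0 = p ∧ γ (dist p q) = q ∧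
    ∀ t₁ ∈ Set.Icc (0 : ℝ) (dist p q), ∀ t₂ ∈ Set.Icc (0 : ℝ) (dist p q),
      dist (γ t₁) (γ t₂) = |t₁ - t₂|

/-- `Γ_K`: the closure of the union of the images of all geodesic curves joining pairs
of distinct points of `K`. -/
def geodesicHull {M : Type*} [MetricSpace M] (K : Set M) : Set M :=
  closure (⋃ (p ∈ K) (q ∈ K) (_ : p ≠ q)
    (γ : ℝ → M) (_ : IsGeodesicCurve p q γ), γ '' Set.Icc (0 : ℝ) (dist p q))

/-!
Near `x₀` the function `F = f ∘ ι⁻¹` is `α`-Hölder in the Euclidean norm and `L`-Lipschitz along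
horizontal curves, and `g` is a mollification of `F` at a small scale `δ`. To bound the derivative
of `g` at `x` along a horizontal field `Y = ∑ⱼ cⱼ Xⱼ`, one would like to compare translation by
`t • Y x` with the flow `Φ` of `Y`, but `F` is too rough in the Euclidean sense to absorb the
difference. Changing variables by `Φ`, which distorts volume in `ℝⁿ` by a factor at most
`exp (n K t)` if `Y` is `K`-Lipschitz, moves the difference onto the mollifier. Its Lipschitz
constant is of order `δ⁻¹ δ⁻ⁿ`, while `Φ` deviates from the translation by `O(δ t)`, so the error
is at most a constant times the oscillation of `F` on a ball of radius `2 δ`, which tends to `0`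
with `δ`. Hence `‖X(g)‖ ≤ L (1 + η)`, and contracting the values of `g` by `(1 + η)⁻¹` about `x₀`
gives the exact constant `L`. Integrating `X(g)` along almost minimizing curves yields the
Lipschitz bound on `K`.
-/

lemma norm_le_of_lipschitzOnWith_closedBall {E F : Type*} [SeminormedAddCommGroup E]
    [SeminormedAddCommGroup F] {Y : E → F} {x y : E} {K : NNReal} {r : ℝ}
    (hY : LipschitzOnWith K Y (closedBall x r)) (hy : y ∈ closedBall x r) :
    ‖Y y‖ ≤ ‖Y x‖ + K * r := by
  have hx : x ∈ closedBall x r := mem_closedBall_self (nonempty_closedBall.1 ⟨y, hy⟩)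
  calc ‖Y y‖ ≤ ‖Y x‖ + ‖Y y - Y x‖ := by simpa using norm_add_le (Y x) (Y y - Y x)
    _ ≤ ‖Y x‖ + K * ‖y - x‖ := by gcongr; exact hY.norm_sub_le hy hx
    _ ≤ ‖Y x‖ + K * r := by gcongr; exact mem_closedBall_iff_norm.1 hy

section Flow

variable {E : Type*} [NormedAddCommGroup E] [NormedSpace ℝ E] {Y : E → E} {x : E} {δ τ : ℝ}
  {K : NNReal}

/-- A local flow of the vector field `Y` near `x`: for `y` in the closed `δ`-ball about `x`, the
curve `Φ y` is the trajectory of `Y` issued from `y`; it lives on `[0, τ]`, does not leave the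
closed `2δ`-ball, and depends continuously on `y`. -/
structure IsLocalFlow (Y : E → E) (x : E) (δ τ : ℝ) (Φ : E → ℝ → E) : Prop where
  map_zero : ∀ y ∈ closedBall x δ, Φ y 0 = y
  isIntegralCurveOn : ∀ y ∈ closedBall x δ, IsIntegralCurveOn (Φ y) (fun _ => Y) (Icc 0 τ)
  mem_closedBall : ∀ y ∈ closedBall x δ, ∀ t ∈ Icc 0 τ, Φ y t ∈ closedBall x (2 * δ)
  continuousOn : ∀ t ∈ Icc 0 τ, ContinuousOn (fun y => Φ y t) (closedBall x δ)

lemma hasDerivWithinAt_Ici_of_isIntegralCurveOn {v : ℝ → E → E} {γ : ℝ → E} {a b t : ℝ}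
    (hγ : IsIntegralCurveOn γ v (Icc a b)) (ht : t ∈ Ico a b) :
    HasDerivWithinAt γ (v t (γ t)) (Ici t) t :=
  (hγ t (Ico_subset_Icc_self ht)).mono_of_mem_nhdsWithin (Icc_mem_nhdsGE_of_mem ht)

lemma mem_closedBall_of_isIntegralCurveOn {v : ℝ → E → E} {γ : ℝ → E} {M r : ℝ} (hM : 0 ≤ M)
    (hv : ∀ t, ∀ y ∈ closedBall (γ 0) r, ‖v t y‖ < M) (hτ : M * τ ≤ r)
    (hγ : IsIntegralCurveOn γ v (Icc 0 τ)) {t : ℝ} (ht : t ∈ Icc 0 τ) :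
    γ t ∈ closedBall (γ 0) r := by
  have htr : ∀ u ≤ τ, M * u ≤ r := fun u hu => (mul_le_mul_of_nonneg_left hu hM).trans hτ
  have hspeed : ‖γ t - γ 0‖ ≤ M * t := by
    refine image_norm_le_of_norm_deriv_right_lt_deriv_boundary (f := fun u => γ u - γ 0)
      (f' := fun u => v u (γ u)) (B := fun u => M * u) (B' := fun _ => M)
      (hγ.continuousOn.sub continuousOn_const)
      (fun u hu => (hasDerivWithinAt_Ici_of_isIntegralCurveOn hγ hu).sub_const _)
      (by simp) (fun u => by simpa using (hasDerivAt_id u).const_mul M) (fun u hu h => ?_) ht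
    exact hv u _ (mem_closedBall_iff_norm.2 (h.trans_le (htr u hu.2.le)))
  exact mem_closedBall_iff_norm.2 (hspeed.trans (htr t ht.2))

lemma exists_isLocalFlow [CompleteSpace E] (hδ : 0 < δ)
    (hY : LipschitzOnWith K Y (closedBall x (2 * δ))) :
    ∃ τ > 0, ∃ Φ, IsLocalFlow Y x δ τ Φ := by
  lift δ to NNReal using hδ.le
  have hbound := fun y => norm_le_of_lipschitzOnWith_closedBall (y := y) hY
  set M : NNReal := ‖Y x‖₊ + K * (2 * δ) + 1 with hM
  have hMcoe : (M : ℝ) = ‖Y x‖ + K * (2 * δ) + 1 := by simp [hM]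
  have hlt : ∀ y ∈ closedBall x (2 * δ : ℝ), ‖Y y‖ < M := fun y hy => by
    linarith [hbound y hy, hMcoe]
  set τ : ℝ := δ / M
  have hM0 : (0 : ℝ) < M := by positivity
  have hMτ : M * τ = δ := mul_div_cancel₀ _ hM0.ne'
  have hτ0 : 0 < τ := by positivity
  have hPL : IsPicardLindelof (fun _ => Y) (tmin := 0) (tmax := τ) ⟨0, le_rfl, hτ0.le⟩ x
      (2 * δ) δ M K := .of_time_independent
    (fun y hy => (hlt y (by simpa using hy)).le) (by simpa using hY) (by
      simp only [sub_zero, sub_self, max_eq_left hτ0.le, hMτ, NNReal.coe_mul, NNReal.coe_ofNat]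
      linarith)
  obtain ⟨Φ, hΦ, L, hL⟩ := hPL.exists_forall_mem_closedBall_eq_hasDerivWithinAt_lipschitzOnWith
  refine ⟨τ, hτ0, Φ, fun y hy => (hΦ y hy).1, fun y hy => (hΦ y hy).2, fun y hy t ht => ?_,
    fun t ht => (hL t ht).continuousOn⟩
  have hsub : closedBall (Φ y 0) δ ⊆ closedBall x (2 * δ) := by
    rw [(hΦ y hy).1]
    exact closedBall_subset_closedBall' (by linarith [mem_closedBall.1 hy])
  exact hsub (mem_closedBall_of_isIntegralCurveOn hM0.le (fun _ z hz => hlt z (hsub hz)) hMτ.le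
    (hΦ y hy).2 ht)

lemma dist_initial_le_of_isIntegralCurveOn {s : Set E} (hY : LipschitzOnWith K Y s) {γ η : ℝ → E}
    {t : ℝ} (ht : 0 ≤ t) (hγ : IsIntegralCurveOn γ (fun _ => Y) (Icc 0 t))
    (hγs : ∀ u ∈ Icc 0 t, γ u ∈ s) (hη : IsIntegralCurveOn η (fun _ => Y) (Icc 0 t))
    (hηs : ∀ u ∈ Icc 0 t, η u ∈ s) :
    dist (γ 0) (η 0) ≤ Real.exp (K * t) * dist (γ t) (η t) := by
  have hmaps : MapsTo (fun u => t - u) (Icc 0 t) (Icc 0 t) := fun u hu =>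
    ⟨sub_nonneg.2 hu.2, sub_le_self t hu.1⟩
  have hreverse : ∀ {ζ : ℝ → E}, IsIntegralCurveOn ζ (fun _ => Y) (Icc 0 t) →
      IsIntegralCurveOn (fun u => ζ (t - u)) (fun _ => -Y) (Icc 0 t) := fun hζ u hu => by
    simpa [Function.comp_def] using
      (hζ (t - u) (hmaps hu)).scomp u ((hasDerivWithinAt_id u _).const_sub t) hmaps
  have key := dist_le_of_trajectories_ODE_of_mem (v := fun _ => -Y) (s := fun _ => s) (K := K)
    (fun _ _ => hY.neg) (hreverse hγ).continuousOn
    (fun u => hasDerivWithinAt_Ici_of_isIntegralCurveOn (hreverse hγ))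
    (fun u hu => hγs _ (hmaps (Ico_subset_Icc_self hu))) (hreverse hη).continuousOn
    (fun u => hasDerivWithinAt_Ici_of_isIntegralCurveOn (hreverse hη))
    (fun u hu => hηs _ (hmaps (Ico_subset_Icc_self hu))) le_rfl t (right_mem_Icc.2 ht)
  simpa [mul_comm] using key

namespace IsLocalFlow

variable {Φ : E → ℝ → E} {t : ℝ}

lemma dist_le (hΦ : IsLocalFlow Y x δ τ Φ) (hY : LipschitzOnWith K Y (closedBall x (2 * δ)))
    (ht : t ∈ Icc 0 τ) {y z : E} (hy : y ∈ closedBall x δ) (hz : z ∈ closedBall x δ) :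
    dist y z ≤ Real.exp (K * t) * dist (Φ y t) (Φ z t) := by
  have hsub : Icc 0 t ⊆ Icc 0 τ := Icc_subset_Icc_right ht.2
  have h := dist_initial_le_of_isIntegralCurveOn hY ht.1
    ((hΦ.isIntegralCurveOn y hy).mono hsub) (fun u hu => hΦ.mem_closedBall y hy u (hsub hu))
    ((hΦ.isIntegralCurveOn z hz).mono hsub) (fun u hu => hΦ.mem_closedBall z hz u (hsub hu))
  rwa [hΦ.map_zero y hy, hΦ.map_zero z hz] at h

lemma norm_sub_sub_smul_le (hΦ : IsLocalFlow Y x δ τ Φ)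
    (hY : LipschitzOnWith K Y (closedBall x (2 * δ))) (ht : t ∈ Icc 0 τ) {y : E}
    (hy : y ∈ closedBall x δ) : ‖Φ y t - y - t • Y x‖ ≤ K * (2 * δ) * t := by
  have hx : x ∈ closedBall x (2 * δ) :=
    mem_closedBall_self (nonempty_closedBall.1 ⟨_, hΦ.mem_closedBall y hy t ht⟩)
  have h := norm_image_sub_le_of_norm_deriv_le_segment' (f := fun u => Φ y u - u • Y x)
    (f' := fun u => Y (Φ y u) - (1 : ℝ) • Y x) (C := K * (2 * δ))
    (fun u hu => (hΦ.isIntegralCurveOn y hy u hu).sub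
      ((hasDerivWithinAt_id u _).smul_const (Y x))) (fun u hu => ?_) t ht
  · simpa [hΦ.map_zero y hy, sub_right_comm] using h
  · have hu := hΦ.mem_closedBall y hy u (Ico_subset_Icc_self hu)
    rw [one_smul]
    exact (hY.norm_sub_le hu hx).trans (by gcongr; exact mem_closedBall_iff_norm.1 hu)

end IsLocalFlow

end Flow

section Mollification

open MeasureTheory Measure Module ContinuousLinearMap
open scoped Convolution

variable {E : Type*} [NormedAddCommGroup E] [NormedSpace ℝ E] [FiniteDimensional ℝ E]
  [MeasurableSpace E] [BorelSpace E] (μ : Measure E) [μ.IsAddHaarMeasure]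

lemma measure_preimage_inter_le_of_antilipschitzWith {A : Set E} {T : E → E} {k : NNReal}
    (hT : AntilipschitzWith k (A.domRestrict T)) (B : Set E) :
    μ (T ⁻¹' B ∩ A) ≤ (k : ENNReal) ^ finrank ℝ E * μ B := by
  have hH : (μH[finrank ℝ E] : Measure E) (T ⁻¹' B ∩ A) ≤
      (k : ENNReal) ^ finrank ℝ E * (μH[finrank ℝ E] : Measure E) B := by
    have hpre : T ⁻¹' B ∩ A = Subtype.val '' (A.domRestrict T ⁻¹' B) := by
      ext y; simp [Set.domRestrict, and_comm]
    rw [hpre, isometry_subtype_coe.hausdorffMeasure_image (.inl (Nat.cast_nonneg _)),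
      ← ENNReal.rpow_natCast]
    exact hT.hausdorffMeasure_preimage_le (Nat.cast_nonneg _) B
  rw [isAddLeftInvariant_eq_smul μ (μH[finrank ℝ E] : Measure E)]
  simp only [Measure.smul_apply, ENNReal.smul_def, smul_eq_mul]
  rw [mul_left_comm]
  gcongr

lemma setIntegral_comp_le_of_antilipschitzWith {A : Set E} (hA : MeasurableSet A) {T : E → E}
    (hTc : ContinuousOn T A) {k : NNReal} (hT : AntilipschitzWith k (A.domRestrict T)) {h : E → ℝ}
    (h_nonneg : 0 ≤ h) (hh : Integrable h μ) :
    IntegrableOn (h ∘ T) A μ ∧ ∫ y in A, h (T y) ∂μ ≤ k ^ finrank ℝ E * ∫ y, h y ∂μ := by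
  have hTm : AEMeasurable T (μ.restrict A) := hTc.aemeasurable hA
  have hle : Measure.map T (μ.restrict A) ≤ (k ^ finrank ℝ E) • μ := by
    refine Measure.le_iff.2 fun B hB => ?_
    rw [map_apply_of_aemeasurable hTm hB, restrict_apply' hA, Measure.smul_apply, ENNReal.smul_def,
      ENNReal.coe_pow]
    exact measure_preimage_inter_le_of_antilipschitzWith μ hT B
  have hh' : Integrable h ((k ^ finrank ℝ E) • μ) := hh.smul_measure_nnreal
  have hmap := hh'.mono_measure hle
  refine ⟨hmap.comp_aemeasurable hTm, ?_⟩
  rw [← integral_map hTm hmap.aestronglyMeasurable]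
  refine (integral_mono_measure hle (.of_forall h_nonneg) hh').trans_eq ?_
  rw [integral_smul_nnreal_measure, NNReal.smul_def, NNReal.coe_pow, smul_eq_mul]

lemma exists_lipschitzWith_normed_mul_measure_closedBall_le {R : ℝ} (hR : 1 < R) :
    ∃ C : ℝ, 0 ≤ C ∧ ∀ {c : E} (φ : ContDiffBump c), φ.rOut = R * φ.rIn →
      ∃ ℓ : NNReal, LipschitzWith ℓ (φ.normed μ) ∧
        ℓ * φ.rOut * μ.real (closedBall c φ.rOut) ≤ C := by
  let b : ContDiffBump (0 : E) := ⟨1, R, one_pos, hR⟩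
  obtain ⟨ℓ₀, hℓ₀⟩ := ContDiff.lipschitzWith_of_hasCompactSupport (𝕂 := ℝ) (n := 1)
    b.hasCompactSupport b.contDiff one_ne_zero
  refine ⟨ℓ₀ * R * R ^ finrank ℝ E, by positivity, fun {c} φ hφ => ?_⟩
  have hIn := φ.rIn_pos
  set I := ∫ y, φ y ∂μ
  have hIpos : 0 < I := φ.integral_pos
  have hscale : ∀ y, φ y = b (φ.rIn⁻¹ • (y - c)) := fun y => by
    simp only [ContDiffBump.apply, b, hφ]
    simp [hIn.ne']
  have hvol : μ.real (closedBall c φ.rOut) ≤ R ^ finrank ℝ E * I := by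
    rw [← div_le_iff₀' (by positivity)]
    exact φ.measure_closedBall_div_le_integral μ R hφ.le
  refine ⟨ℓ₀ * (φ.rIn * I)⁻¹.toNNReal, LipschitzWith.of_dist_le_mul fun y z => ?_, ?_⟩
  · have h := hℓ₀.dist_le_mul (φ.rIn⁻¹ • (y - c)) (φ.rIn⁻¹ • (z - c))
    rw [← hscale, ← hscale, dist_smul₀, dist_sub_right, Real.norm_of_nonneg (by positivity)] at h
    have hdiv : dist (φ.normed μ y) (φ.normed μ z) = dist (φ y) (φ z) * I⁻¹ := by
      rw [φ.normed_def, φ.normed_def, Real.dist_eq, Real.dist_eq, ← sub_div, abs_div,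
        abs_of_pos hIpos, div_eq_mul_inv]
    rw [hdiv, NNReal.coe_mul, Real.coe_toNNReal _ (by positivity), mul_inv]
    refine (mul_le_mul_of_nonneg_right h (by positivity)).trans_eq (by ring)
  · rw [NNReal.coe_mul, Real.coe_toNNReal _ (by positivity)]
    calc ℓ₀ * (φ.rIn * I)⁻¹ * φ.rOut * μ.real (closedBall c φ.rOut)
        ≤ ℓ₀ * (φ.rIn * I)⁻¹ * φ.rOut * (R ^ finrank ℝ E * I) := by
          have := φ.rOut_pos; gcongr
      _ = ℓ₀ * R * R ^ finrank ℝ E := by rw [hφ]; field_simp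

variable {μ} (φ : ContDiffBump (0 : E)) {F : E → ℝ}

lemma integrable_normed_mul_comp_sub (hF : LocallyIntegrable F μ) (x : E) :
    Integrable (fun w => φ.normed μ w * F (x - w)) μ :=
  φ.hasCompactSupport_normed.convolutionExists_left (lsmul ℝ ℝ) φ.continuous_normed hF x

lemma integrable_normed_sub_mul (hF : LocallyIntegrable F μ) (x : E) :
    Integrable (fun y => φ.normed μ (x - y) * F y) μ := by
  simpa using (integrable_normed_mul_comp_sub φ hF x).comp_sub_left x

lemma normed_convolution_const_sub (hF : LocallyIntegrable F μ) (c : ℝ) :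
    (φ.normed μ ⋆[lsmul ℝ ℝ, μ] fun y => c - F y) =
      fun x => c - (φ.normed μ ⋆[lsmul ℝ ℝ, μ] F) x := by
  ext x
  simp only [convolution_lsmul, smul_eq_mul, mul_sub]
  rw [integral_sub (φ.integrable_normed.mul_const c) (integrable_normed_mul_comp_sub φ hF x),
    integral_mul_const, φ.integral_normed, one_mul]

lemma abs_normed_convolution_sub_le (hF : LocallyIntegrable F μ) {x y : E} {D : ℝ}
    (hD : ∀ w ∈ ball 0 φ.rOut, |F (x - w) - F (y - w)| ≤ D) :
    |(φ.normed μ ⋆[lsmul ℝ ℝ, μ] F) x - (φ.normed μ ⋆[lsmul ℝ ℝ, μ] F) y| ≤ D := by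
  have hle : ∀ w, ‖φ.normed μ w * F (x - w) - φ.normed μ w * F (y - w)‖ ≤ φ.normed μ w * D := by
    intro w
    rw [← mul_sub, Real.norm_eq_abs, abs_mul, abs_of_nonneg (φ.nonneg_normed w)]
    by_cases hw : w ∈ ball 0 φ.rOut
    · exact mul_le_mul_of_nonneg_left (hD w hw) (φ.nonneg_normed w)
    · rw [← φ.support_normed_eq (μ := μ), Function.notMem_support] at hw
      simp [hw]
  simp only [convolution_lsmul, smul_eq_mul]
  rw [← integral_sub (integrable_normed_mul_comp_sub φ hF x)
    (integrable_normed_mul_comp_sub φ hF y)]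
  refine (norm_integral_le_of_norm_le (φ.integrable_normed.mul_const D)
    (.of_forall hle)).trans_eq ?_
  rw [integral_mul_const, φ.integral_normed, one_mul]

lemma normed_convolution_eq_setIntegral (x : E) :
    (φ.normed μ ⋆[lsmul ℝ ℝ, μ] F) x =
      ∫ y in closedBall x φ.rOut, φ.normed μ (x - y) * F y ∂μ := by
  rw [convolution_lsmul_swap, setIntegral_eq_integral_of_forall_compl_eq_zero fun y hy => ?_]
  · rfl
  · have : x - y ∉ Function.support (φ.normed μ) := by
      rw [φ.support_normed_eq, mem_ball_zero_iff, ← dist_eq_norm, dist_comm]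
      exact fun h => hy h.le
    rw [Function.notMem_support.1 this, zero_mul]

lemma setIntegral_normed_sub (x : E) :
    ∫ y in closedBall x φ.rOut, φ.normed μ (x - y) ∂μ = 1 := by
  have h := normed_convolution_eq_setIntegral φ (μ := μ) (F := fun _ => 1) x
  rw [convolution_lsmul, φ.integral_normed_smul μ 1] at h
  simpa using h.symm

lemma normed_sub_mul_nonneg {z : E} (hF : ∀ w ∈ ball z φ.rOut, 0 ≤ F w) (w : E) :
    0 ≤ φ.normed μ (z - w) * F w := by
  by_cases hw : z - w ∈ Function.support (φ.normed μ)
  · rw [φ.support_normed_eq, mem_ball_zero_iff] at hw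
    exact mul_nonneg (φ.nonneg_normed _) (hF w (mem_ball_iff_norm'.2 hw))
  · simp [Function.notMem_support.1 hw]

omit [BorelSpace E] [μ.IsAddHaarMeasure] in
lemma normed_sub_mul_le_of_norm_sub_sub_le {ℓ : NNReal} (hℓ : LipschitzWith ℓ (φ.normed μ))
    {x v y y' : E} {η H a : ℝ} (hy : ‖y' - y - v‖ ≤ η) (hFy : F y ≤ F y' + a)
    (hFy' : F y' ∈ Icc 0 H) :
    φ.normed μ (x - y) * F y ≤
      φ.normed μ (x + v - y') * F y' + (ℓ * η * H + φ.normed μ (x - y) * a) := by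
  have hφ : φ.normed μ (x - y) - φ.normed μ (x + v - y') ≤ ℓ * η :=
    calc _ ≤ ℓ * dist (x - y) (x + v - y') := (le_abs_self _).trans (hℓ.dist_le_mul _ _)
      _ = ℓ * ‖y' - y - v‖ := by rw [dist_eq_norm]; congr 2; abel
      _ ≤ ℓ * η := by gcongr
  have hℓη : 0 ≤ ℓ * η := mul_nonneg ℓ.2 ((norm_nonneg _).trans hy)
  calc φ.normed μ (x - y) * F y ≤ φ.normed μ (x - y) * (F y' + a) :=
        mul_le_mul_of_nonneg_left hFy (φ.nonneg_normed _)
    _ = φ.normed μ (x + v - y') * F y' +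
          ((φ.normed μ (x - y) - φ.normed μ (x + v - y')) * F y' + φ.normed μ (x - y) * a) := by
        ring
    _ ≤ _ := by gcongr; exacts [hFy'.1, hFy'.2]

-- The transport error is charged to `φ`, which is Lipschitz, and not to `F`, which need not be.
lemma normed_convolution_le_of_antilipschitzWith {ℓ : NNReal}
    (hℓ : LipschitzWith ℓ (φ.normed μ)) {T : E → E} {k : NNReal} {x v : E} {η H a : ℝ}
    (hTc : ContinuousOn T (closedBall x φ.rOut))
    (hT : AntilipschitzWith k ((closedBall x φ.rOut).domRestrict T))
    (hTv : ∀ y ∈ closedBall x φ.rOut, ‖T y - y - v‖ ≤ η) (hF : LocallyIntegrable F μ)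
    (hF_nonneg : ∀ w ∈ ball (x + v) φ.rOut, 0 ≤ F w)
    (hFT : ∀ y ∈ closedBall x φ.rOut, F (T y) ∈ Icc 0 H)
    (hFTa : ∀ y ∈ closedBall x φ.rOut, F y ≤ F (T y) + a) :
    (φ.normed μ ⋆[lsmul ℝ ℝ, μ] F) x ≤
      k ^ finrank ℝ E * (φ.normed μ ⋆[lsmul ℝ ℝ, μ] F) (x + v) +
        (ℓ * η * H * μ.real (closedBall x φ.rOut) + a) := by
  set A := closedBall x φ.rOut
  set ψ : E → ℝ := fun w => φ.normed μ (x + v - w) * F w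
  obtain ⟨hψT, hle⟩ := setIntegral_comp_le_of_antilipschitzWith μ measurableSet_closedBall hTc hT
    (normed_sub_mul_nonneg φ hF_nonneg) (integrable_normed_sub_mul φ hF (x + v))
  have hφa : IntegrableOn (fun y => φ.normed μ (x - y) * a) A μ :=
    ((φ.integrable_normed.comp_sub_left x).mul_const a).integrableOn
  have hconst : IntegrableOn (fun _ => ℓ * η * H) A μ :=
    integrableOn_const (isCompact_closedBall x _).measure_ne_top
  have herr : ∫ y in A, (ℓ * η * H + φ.normed μ (x - y) * a) ∂μ = ℓ * η * H * μ.real A + a := by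
    rw [integral_add hconst hφa, setIntegral_const, integral_mul_const, setIntegral_normed_sub,
      smul_eq_mul, one_mul, mul_comm (μ.real A)]
  calc (φ.normed μ ⋆[lsmul ℝ ℝ, μ] F) x = ∫ y in A, φ.normed μ (x - y) * F y ∂μ :=
        normed_convolution_eq_setIntegral φ x
    _ ≤ ∫ y in A, (ψ (T y) + (ℓ * η * H + φ.normed μ (x - y) * a)) ∂μ :=
        setIntegral_mono_on (integrable_normed_sub_mul φ hF x).integrableOn
          (hψT.add (hconst.add hφa)) measurableSet_closedBall fun y hy =>
            normed_sub_mul_le_of_norm_sub_sub_le φ hℓ (hTv y hy) (hFTa y hy) (hFT y hy)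
    _ = ∫ y in A, ψ (T y) ∂μ + (ℓ * η * H * μ.real A + a) :=
        by rw [← herr]; exact integral_add hψT (hconst.add hφa)
    _ ≤ _ := by gcongr; exact hle.trans_eq (by rw [convolution_lsmul_swap]; rfl)

end Mollification

lemma neg_fderiv_apply_le_of_eventually_le_exp_mul_add {E : Type*} [NormedAddCommGroup E]
    [NormedSpace ℝ E] {u : E → ℝ} {x v : E} {a b : ℝ} (hu : DifferentiableAt ℝ u x)
    (h : ∀ᶠ t : ℝ in 𝓝[>] 0, u x ≤ Real.exp (a * t) * u (x + t • v) + b * t) :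
    -fderiv ℝ u x v ≤ a * u x + b := by
  have hline : HasDerivAt (fun t : ℝ => x + t • v) v 0 := by
    simpa using ((hasDerivAt_id (0 : ℝ)).smul_const v).const_add x
  have hexp : HasDerivAt (fun t : ℝ => Real.exp (a * t)) a 0 := by
    simpa using ((hasDerivAt_id (0 : ℝ)).const_mul a).exp
  have hu' : HasDerivAt (fun t : ℝ => u (x + t • v)) (fderiv ℝ u x v) 0 :=
    HasFDerivAt.comp_hasDerivAt_of_eq 0 hu.hasFDerivAt hline (by simp)
  have hderiv := (hexp.mul hu').add ((hasDerivAt_id (0 : ℝ)).const_mul b)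
  have hslope := (hasDerivAt_iff_tendsto_slope_zero.1 hderiv).mono_left (nhdsGT_le_nhdsNE 0)
  have hnonneg := ge_of_tendsto hslope (b := 0) <| by
    filter_upwards [h, self_mem_nhdsWithin] with t ht (ht0 : 0 < t)
    refine mul_nonneg (inv_nonneg.2 ht0.le) ?_
    simpa using ht
  simp only [zero_smul, add_zero, mul_zero, Real.exp_zero, one_mul, mul_one] at hnonneg
  linarith

section FlowMollification

open MeasureTheory Measure Module ContinuousLinearMap
open scoped Convolution

variable {E : Type*} [NormedAddCommGroup E] [NormedSpace ℝ E] [FiniteDimensional ℝ E]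
  [MeasurableSpace E] [BorelSpace E] {μ : Measure E} [μ.IsAddHaarMeasure]
  (φ : ContDiffBump (0 : E)) {Y : E → E} {F : E → ℝ} {K ℓ : NNReal} {x : E} {C L : ℝ}

lemma normed_convolution_le_of_isLocalFlow (hℓ : LipschitzWith ℓ (φ.normed μ))
    (hC : ℓ * φ.rOut * μ.real (closedBall x φ.rOut) ≤ C)
    (hY : LipschitzOnWith K Y (closedBall x (2 * φ.rOut))) {Φ : E → ℝ → E} {τ t H : ℝ}
    (hΦ : IsLocalFlow Y x φ.rOut τ Φ) (ht : t ∈ Icc 0 τ) (htY : ‖t • Y x‖ ≤ φ.rOut)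
    (hF : LocallyIntegrable F μ) (hFH : ∀ y ∈ closedBall x (2 * φ.rOut), F y ∈ Icc 0 H)
    (hFL : ∀ y ∈ closedBall x φ.rOut, F y ≤ F (Φ y t) + L * t) :
    (φ.normed μ ⋆[lsmul ℝ ℝ, μ] F) x ≤
      Real.exp (finrank ℝ E * K * t) * (φ.normed μ ⋆[lsmul ℝ ℝ, μ] F) (x + t • Y x) +
        (2 * C * K * H + L) * t := by
  have hsub : ball (x + t • Y x) φ.rOut ⊆ closedBall x (2 * φ.rOut) :=
    ball_subset_closedBall.trans (closedBall_subset_closedBall' (by simpa [two_mul] using htY))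
  have hH : 0 ≤ H := by
    have h := hFH x (mem_closedBall_self (by linarith [φ.rOut_pos]))
    exact h.1.trans h.2
  have hanti : AntilipschitzWith (Real.exp (K * t)).toNNReal
      ((closedBall x φ.rOut).domRestrict fun y => Φ y t) :=
    AntilipschitzWith.of_le_mul_dist fun y z => by
      rw [Real.coe_toNNReal _ (Real.exp_pos _).le]
      exact hΦ.dist_le hY ht y.2 z.2
  have h := normed_convolution_le_of_antilipschitzWith φ hℓ (hΦ.continuousOn t ht) hanti
    (fun y hy => hΦ.norm_sub_sub_smul_le hY ht hy) hF (fun w hw => (hFH w (hsub hw)).1)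
    (fun y hy => hFH _ (hΦ.mem_closedBall y hy t ht)) hFL
  rw [Real.coe_toNNReal _ (Real.exp_pos _).le, ← Real.exp_nat_mul, ← mul_assoc] at h
  have ht0 := ht.1
  have herr : ℓ * (K * (2 * φ.rOut) * t) * H * μ.real (closedBall x φ.rOut) + L * t ≤
      (2 * C * K * H + L) * t :=
    calc _ = (2 * (ℓ * φ.rOut * μ.real (closedBall x φ.rOut)) * K * H + L) * t := by ring
      _ ≤ _ := by gcongr
  linarith

lemma differentiable_normed_convolution (hF : LocallyIntegrable F μ) :
    Differentiable ℝ (φ.normed μ ⋆[lsmul ℝ ℝ, μ] F) :=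
  (φ.hasCompactSupport_normed.contDiff_convolution_left (lsmul ℝ ℝ) (n := 1)
    φ.contDiff_normed hF).differentiable one_ne_zero

lemma neg_fderiv_normed_convolution_apply_le (hℓ : LipschitzWith ℓ (φ.normed μ))
    (hC : ℓ * φ.rOut * μ.real (closedBall x φ.rOut) ≤ C)
    (hY : LipschitzOnWith K Y (closedBall x (2 * φ.rOut))) (hF : LocallyIntegrable F μ)
    {H : ℝ} (hFH : ∀ y ∈ closedBall x (2 * φ.rOut), F y ∈ Icc 0 H)
    (hFL : ∀ γ : ℝ → E, ∀ t ≥ 0, IsIntegralCurveOn γ (fun _ => Y) (Icc 0 t) →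
      MapsTo γ (Icc 0 t) (closedBall x (2 * φ.rOut)) → F (γ 0) ≤ F (γ t) + L * t) :
    -fderiv ℝ (φ.normed μ ⋆[lsmul ℝ ℝ, μ] F) x (Y x) ≤
      finrank ℝ E * K * (φ.normed μ ⋆[lsmul ℝ ℝ, μ] F) x + (2 * C * K * H + L) := by
  obtain ⟨τ, hτ, Φ, hΦ⟩ := exists_isLocalFlow φ.rOut_pos hY
  have hsmall : ∀ᶠ t : ℝ in 𝓝[>] 0, ‖t • Y x‖ ≤ φ.rOut := by
    have : Tendsto (fun t : ℝ => ‖t • Y x‖) (𝓝[>] 0) (𝓝 0) :=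
      (Continuous.tendsto' (by fun_prop) 0 0 (by simp)).mono_left nhdsWithin_le_nhds
    exact this.eventually_le_const φ.rOut_pos
  refine neg_fderiv_apply_le_of_eventually_le_exp_mul_add
    (differentiable_normed_convolution φ hF x) ?_
  filter_upwards [hsmall, Ioc_mem_nhdsGT hτ] with t htY ht
  have ht := Ioc_subset_Icc_self ht
  have hsub : Icc 0 t ⊆ Icc 0 τ := Icc_subset_Icc_right ht.2
  refine normed_convolution_le_of_isLocalFlow φ hℓ hC hY hΦ ht htY hF hFH fun y hy => ?_
  simpa only [hΦ.map_zero y hy] using hFL (Φ y) t ht.1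
    ((hΦ.isIntegralCurveOn y hy).mono hsub) fun u hu => hΦ.mem_closedBall y hy u (hsub hu)

lemma fderiv_normed_convolution_apply_le (hℓ : LipschitzWith ℓ (φ.normed μ))
    (hC : ℓ * φ.rOut * μ.real (closedBall x φ.rOut) ≤ C)
    (hY : LipschitzOnWith K Y (closedBall x (2 * φ.rOut))) (hF : LocallyIntegrable F μ)
    {ω : ℝ} (hω : ∀ y ∈ closedBall x (2 * φ.rOut), |F y - F x| ≤ ω)
    (hFL : ∀ γ : ℝ → E, ∀ t ≥ 0, IsIntegralCurveOn γ (fun _ => Y) (Icc 0 t) →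
      MapsTo γ (Icc 0 t) (closedBall x (2 * φ.rOut)) → F (γ t) - F (γ 0) ≤ L * t) :
    fderiv ℝ (φ.normed μ ⋆[lsmul ℝ ℝ, μ] F) x (Y x) ≤
      L + 2 * ω * K * (finrank ℝ E + 2 * C) := by
  set g := φ.normed μ ⋆[lsmul ℝ ℝ, μ] F
  -- Reflecting `F` makes it nonnegative near `x` and turns the lower bound into an upper one.
  have key := neg_fderiv_normed_convolution_apply_le φ hℓ hC hY (L := L) (H := 2 * ω)
    ((locallyIntegrable_const (F x + ω)).sub hF)
    (fun y hy => by
      have := abs_le.1 (hω y hy)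
      constructor <;> simp only [Pi.sub_apply] <;> linarith)
    (fun γ t ht hγ hγx => by
      have := hFL γ t ht hγ hγx
      simp only [Pi.sub_apply]; linarith)
  have hg : |g x - F x| ≤ ω :=
    φ.dist_normed_convolution_le hF.aestronglyMeasurable fun y hy =>
      hω y (closedBall_subset_closedBall (by linarith [φ.rOut_pos]) (ball_subset_closedBall hy))
  have hux : F x + ω - g x ≤ 2 * ω := by linarith [(abs_le.1 hg).1]
  rw [show ((fun _ => F x + ω) - F) = fun y => F x + ω - F y from rfl,
    normed_convolution_const_sub φ hF, fderiv_const_sub, _root_.neg_apply, neg_neg] at key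
  have : finrank ℝ E * K * (F x + ω - g x) ≤ finrank ℝ E * K * (2 * ω) := by gcongr
  linarith

end FlowMollification

section Horizontal

open MeasureTheory

lemma sub_le_of_absolutelyContinuousOnInterval {h : ℝ → ℝ} {a b L : ℝ} (hab : a ≤ b)
    (hh : AbsolutelyContinuousOnInterval h a b) (hL : ∀ᵐ t, t ∈ Ioo a b → deriv h t ≤ L) :
    h b - h a ≤ L * (b - a) := by
  have hL' : ∀ᵐ t ∂volume.restrict (Icc a b), deriv h t ≤ L := by
    rwa [← restrict_Ioo_eq_restrict_Icc, ae_restrict_iff' measurableSet_Ioo]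
  calc h b - h a = ∫ t in a..b, deriv h t := hh.integral_deriv_eq_sub.symm
    _ ≤ ∫ _ in a..b, L := intervalIntegral.integral_mono_ae_restrict hab
        hh.intervalIntegrable_deriv intervalIntegrable_const hL'
    _ = L * (b - a) := by rw [intervalIntegral.integral_const, smul_eq_mul, mul_comm]

lemma norm_le_of_forall_inner_le {V : Type*} [NormedAddCommGroup V] [InnerProductSpace ℝ V]
    {v : V} {C : ℝ} (h : ∀ c : V, ‖c‖ ≤ 1 → inner ℝ c v ≤ C) : ‖v‖ ≤ C := by
  obtain rfl | hv := eq_or_ne v 0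
  · simpa using h 0
  · have hv0 : ‖v‖ ≠ 0 := norm_ne_zero_iff.2 hv
    have h1 := h (‖v‖⁻¹ • v) (by simp [norm_smul, hv0])
    rwa [real_inner_smul_left, real_inner_self_eq_norm_sq, pow_two, inv_mul_cancel_left₀ hv0] at h1

namespace CCData

variable {d s : ℕ} {S : CCData d s} {g : Euc d → ℝ} {x : Euc d} {b : ℝ} {γ : ℝ → Euc d}

/-- The horizontal vector field `∑ⱼ cⱼ Xⱼ` with constant coefficients `c`. The coefficients are
taken in `ℓ₂^s`, so that `‖c‖ ≤ 1` is the constraint on the speed of admissible curves. -/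
def horizontalField (S : CCData d s) (c : EuclideanSpace ℝ (Fin s)) (x : Euc d) : Euc d :=
  ∑ j, c j • S.X j x

/-- The horizontal gradient `X(g)(x) = (X₁(g)(x), …, X_s(g)(x))`, as an element of `ℓ₂^s`. -/
def horizontalGrad (S : CCData d s) (g : Euc d → ℝ) (x : Euc d) : EuclideanSpace ℝ (Fin s) :=
  WithLp.toLp 2 fun j => fderiv ℝ g x (S.X j x)

lemma norm_horizontalGrad :
    ‖S.horizontalGrad g x‖ = Real.sqrt (∑ j, (fderiv ℝ g x (S.X j x)) ^ 2) := by
  simp [horizontalGrad, EuclideanSpace.norm_eq]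

lemma fderiv_horizontalField (c : EuclideanSpace ℝ (Fin s)) :
    fderiv ℝ g x (S.horizontalField c x) = inner ℝ c (S.horizontalGrad g x) := by
  simp [horizontalField, horizontalGrad, PiLp.inner_apply, mul_comm]

lemma fderiv_horizontalField_le {c : EuclideanSpace ℝ (Fin s)} (hc : ‖c‖ ≤ 1) :
    fderiv ℝ g x (S.horizontalField c x) ≤ ‖S.horizontalGrad g x‖ := by
  rw [fderiv_horizontalField]
  exact (real_inner_le_norm _ _).trans (mul_le_of_le_one_left (norm_nonneg _) hc)

lemma norm_horizontalField_le {c : EuclideanSpace ℝ (Fin s)} (hc : ‖c‖ ≤ 1) :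
    ‖S.horizontalField c x‖ ≤ ∑ j, ‖S.X j x‖ :=
  norm_sum_le_of_le _ fun j _ => (norm_smul_le _ _).trans
    (mul_le_of_le_one_left (norm_nonneg _) ((PiLp.norm_apply_le c j).trans hc))

lemma lipschitzOnWith_horizontalField {B : Set (Euc d)} {K : Fin s → NNReal}
    (hX : ∀ j, LipschitzOnWith (K j) (S.X j) B) {c : EuclideanSpace ℝ (Fin s)} (hc : ‖c‖ ≤ 1) :
    LipschitzOnWith (∑ j, K j) (S.horizontalField c) B := by
  refine LipschitzOnWith.of_dist_le_mul fun x hx y hy => ?_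
  rw [NNReal.coe_sum, Finset.sum_mul]
  refine dist_sum_sum_le_of_le _ fun j _ => ?_
  rw [dist_smul₀]
  exact (mul_le_of_le_one_left dist_nonneg ((PiLp.norm_apply_le c j).trans hc)).trans
    ((hX j).dist_le_mul x hx y hy)

lemma continuousOn_X (j : Fin s) : ContinuousOn (S.X j) S.G := fun x hx => by
  obtain ⟨U, hU, K, hK⟩ := S.locallyLipschitz_X j x hx
  exact (hK.continuousOn.continuousAt hU).continuousWithinAt

namespace Admissible

lemma exists_control (hγ : S.Admissible b γ) :
    ∃ c : ℝ → EuclideanSpace ℝ (Fin s), (∀ t ∈ Icc 0 b, ‖c t‖ ≤ 1) ∧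
      IntervalIntegrable (fun t => S.horizontalField (c t) (γ t)) volume 0 b ∧
      ∀ t ∈ Icc 0 b, γ t = γ 0 + ∫ u in 0..t, S.horizontalField (c u) (γ u) := by
  obtain ⟨hb, -, c, -, hc, hint, hγ⟩ := hγ
  refine ⟨fun t => WithLp.toLp 2 fun j => c j t, fun t ht => ?_,
    (intervalIntegrable_iff_integrableOn_Icc_of_le hb).2 hint, hγ⟩
  rw [← sq_le_one_iff₀ (norm_nonneg _), EuclideanSpace.real_norm_sq_eq]
  exact hc t ht

protected lemma continuousOn (hγ : S.Admissible b γ) : ContinuousOn γ (Icc 0 b) := by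
  obtain ⟨c, -, hint, hγc⟩ := hγ.exists_control
  have := intervalIntegral.continuousOn_primitive_interval' hint left_mem_uIcc
  rw [uIcc_of_le hγ.1] at this
  exact (continuousOn_const.add this).congr hγc

lemma restrict (hγ : S.Admissible b γ) {t : ℝ} (ht : t ∈ Icc 0 b) : S.Admissible t γ := by
  obtain ⟨-, hG, c, hcm, hc, hint, hγ⟩ := hγ
  have hsub : Icc 0 t ⊆ Icc 0 b := Icc_subset_Icc_right ht.2
  exact ⟨ht.1, fun u hu => hG u (hsub hu), c, hcm, fun u hu => hc u (hsub hu),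
    hint.mono_set hsub, fun u hu => hγ u (hsub hu)⟩

lemma ccDist_le (hγ : S.Admissible b γ) : S.ccDist (γ 0) (γ b) ≤ b :=
  csInf_le ⟨0, fun _ ⟨_, h, _⟩ => h.1⟩ ⟨γ, hγ, rfl, rfl⟩

lemma exists_lipschitzOnWith (hγ : S.Admissible b γ) : ∃ K, LipschitzOnWith K γ (Icc 0 b) := by
  obtain ⟨c, hc, hint, hγc⟩ := hγ.exists_control
  have hX : ContinuousOn (fun t => ∑ j, ‖S.X j (γ t)‖) (Icc 0 b) :=
    continuousOn_finsetSum _ fun j _ => ((continuousOn_X j).comp hγ.continuousOn hγ.2.1).norm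
  obtain ⟨M, hM⟩ := isCompact_Icc.bddAbove_image hX
  have hspeed : ∀ t ∈ Icc 0 b, ‖S.horizontalField (c t) (γ t)‖ ≤ M := fun t ht =>
    (norm_horizontalField_le (hc t ht)).trans (hM (mem_image_of_mem _ ht))
  have hint' : ∀ t ∈ Icc 0 b,
      IntervalIntegrable (fun t => S.horizontalField (c t) (γ t)) volume 0 t := fun t ht =>
    hint.mono_set (uIcc_subset_uIcc_left (Icc_subset_uIcc ht))
  refine ⟨M.toNNReal, LipschitzOnWith.of_dist_le' fun t ht u hu => ?_⟩
  rw [dist_eq_norm, hγc t ht, hγc u hu, add_sub_add_left_eq_sub,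
    intervalIntegral.integral_interval_sub_left (hint' t ht) (hint' u hu), Real.dist_eq]
  exact intervalIntegral.norm_integral_le_of_norm_le_const fun v hv =>
    hspeed v (ordConnected_Icc.uIcc_subset hu ht (uIoc_subset_uIcc hv))

lemma ae_hasDerivAt (hγ : S.Admissible b γ) :
    ∀ᵐ t, t ∈ Ioo 0 b → ∃ c : EuclideanSpace ℝ (Fin s), ‖c‖ ≤ 1 ∧
      HasDerivAt γ (S.horizontalField c (γ t)) t := by
  obtain ⟨c, hc, hint, hγc⟩ := hγ.exists_control
  filter_upwards [hint.ae_hasDerivAt_integral] with t ht htb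
  refine ⟨c t, hc t (Ioo_subset_Icc_self htb), ?_⟩
  refine ((ht (Icc_subset_uIcc (Ioo_subset_Icc_self htb)) 0 left_mem_uIcc).const_add
    (γ 0)).congr_of_eventuallyEq ?_
  filter_upwards [Ioo_mem_nhds htb.1 htb.2] with u hu using hγc u (Ioo_subset_Icc_self hu)

lemma sub_le (hγ : S.Admissible b γ) (hg : ContDiff ℝ 1 g) {U : Set (Euc d)} {L : ℝ}
    (hγU : MapsTo γ (Icc 0 b) U) (hL : ∀ x ∈ U, ‖S.horizontalGrad g x‖ ≤ L) :
    g (γ b) - g (γ 0) ≤ L * b := by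
  obtain ⟨K, hK⟩ := hγ.exists_lipschitzOnWith
  obtain ⟨K', hK'⟩ := hg.locallyLipschitz.locallyLipschitzOn.exists_lipschitzOnWith_of_compact
    (isCompact_Icc.image_of_continuousOn hγ.continuousOn)
  have hac : AbsolutelyContinuousOnInterval (g ∘ γ) 0 b :=
    LipschitzOnWith.absolutelyContinuousOnInterval <| by
      rw [uIcc_of_le hγ.1]
      exact hK'.comp hK (mapsTo_image _ _)
  refine (sub_le_of_absolutelyContinuousOnInterval hγ.1 hac (L := L) ?_).trans_eq (by rw [sub_zero])
  filter_upwards [hγ.ae_hasDerivAt] with t ht htb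
  obtain ⟨c, hc, hderiv⟩ := ht htb
  have hgγ := ((hg.differentiable one_ne_zero (γ t)).hasFDerivAt).comp_hasDerivAt t hderiv
  rw [hgγ.deriv]
  exact (fderiv_horizontalField_le hc).trans (hL _ (hγU (Ioo_subset_Icc_self htb)))

end Admissible

lemma admissible_of_isIntegralCurveOn {c : EuclideanSpace ℝ (Fin s)} (hc : ‖c‖ ≤ 1) (hb : 0 ≤ b)
    (hγ : IsIntegralCurveOn γ (fun _ => S.horizontalField c) (Icc 0 b))
    (hγG : MapsTo γ (Icc 0 b) S.G) : S.Admissible b γ := by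
  have hcont : ContinuousOn (fun t => S.horizontalField c (γ t)) (Icc 0 b) :=
    continuousOn_finsetSum _ fun j _ =>
      ((continuousOn_X j).comp hγ.continuousOn hγG).const_smul (c j)
  refine ⟨hb, hγG, fun j _ => c j, fun _ => measurable_const, fun _ _ => ?_,
    hcont.integrableOn_compact isCompact_Icc, fun t ht => ?_⟩
  · rw [← EuclideanSpace.real_norm_sq_eq]
    exact (sq_le_one_iff₀ (norm_nonneg _)).2 hc
  · have hsub : Icc 0 t ⊆ Icc 0 b := Icc_subset_Icc_right ht.2
    have hftc := intervalIntegral.integral_eq_sub_of_hasDerivAt_of_le ht.1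
      (hγ.continuousOn.mono hsub)
      (fun u hu => (hγ u (hsub (Ioo_subset_Icc_self hu))).hasDerivAt
        (Icc_mem_nhds hu.1 (hu.2.trans_le ht.2)))
      ((hcont.mono hsub).intervalIntegrable_of_Icc ht.1)
    exact (add_eq_of_eq_sub' hftc).symm

end CCData

end Horizontal

section SmoothApproximation

open MeasureTheory ContinuousLinearMap Module
open scoped Convolution

lemma continuousOn_of_dist_le_mul_rpow {P Q : Type*} [PseudoMetricSpace P] [PseudoMetricSpace Q]
    {f : P → Q} {A : Set P} {C α : ℝ} (hα : 0 < α)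
    (hf : ∀ x ∈ A, ∀ y ∈ A, dist (f x) (f y) ≤ C * dist x y ^ α) : ContinuousOn f A := by
  intro x hx
  rw [ContinuousWithinAt, tendsto_iff_dist_tendsto_zero]
  have hlim : Tendsto (fun y => C * dist y x ^ α) (𝓝[A] x) (𝓝 0) := by
    have hcont : Continuous fun y => C * dist y x ^ α := by fun_prop (disch := exact hα.le)
    simpa [Real.zero_rpow hα.ne'] using (hcont.tendsto x).mono_left nhdsWithin_le_nhds
  refine squeeze_zero' (Eventually.of_forall fun _ => dist_nonneg) ?_ hlim
  filter_upwards [self_mem_nhdsWithin] with y hy using hf y hy x hx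

lemma exists_rpow_mul_le {α R η : ℝ} (hα : 0 < α) (hR : 0 < R) (hη : 0 < η) (A : ℝ) :
    ∃ δ ∈ Ioo 0 R, δ ^ α * A ≤ η := by
  have hcont : Continuous fun δ : ℝ => δ ^ α * A := by fun_prop (disch := exact hα.le)
  have hlim : Tendsto (fun δ : ℝ => δ ^ α * A) (𝓝[>] 0) (𝓝 0) := by
    simpa [Real.zero_rpow hα.ne'] using (hcont.tendsto 0).mono_left nhdsWithin_le_nhds
  obtain ⟨δ, hδ, hδη⟩ := (Filter.Eventually.and (Ioo_mem_nhdsGT hR)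
    (hlim.eventually_le_const hη)).exists
  exact ⟨δ, hδ, hδη⟩

lemma abs_inv_one_add_mul_sub_add_sub_le {η C u v u' v' : ℝ} (hη : 0 ≤ η) (hu : |u - u'| ≤ η)
    (hv : |v - v'| ≤ η) (huv : |u' - v'| ≤ C) :
    |(1 + η)⁻¹ * (u - v) + v' - u'| ≤ η * (2 + C) := by
  have hinv : (1 + η)⁻¹ ≤ 1 := inv_le_one_of_one_le₀ (by linarith)
  have hdecomp : (1 + η)⁻¹ * (u - v) + v' - u' =
      (1 + η)⁻¹ * ((u - u') - (v - v') - η * (u' - v')) := by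
    field_simp
    ring
  calc |(1 + η)⁻¹ * (u - v) + v' - u'|
      = (1 + η)⁻¹ * |(u - u') - (v - v') - η * (u' - v')| := by
        rw [hdecomp, abs_mul, abs_of_nonneg (by positivity)]
    _ ≤ |(u - u') - (v - v') - η * (u' - v')| := mul_le_of_le_one_left (abs_nonneg _) hinv
    _ ≤ |u - u'| + |v - v'| + |η * (u' - v')| :=
        (abs_sub _ _).trans (add_le_add_left (abs_sub _ _) _)
    _ = |u - u'| + |v - v'| + η * |u' - v'| := by rw [abs_mul, abs_of_nonneg hη]
    _ ≤ η + η + η * C := by gcongr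
    _ = η * (2 + C) := by ring

namespace CCData

variable {d s : ℕ} {S : CCData d s} {α C₁ C₂ R : ℝ} {K : Fin s → NNReal} {p x y : Euc d}
  {F : Euc d → ℝ} {L : NNReal} {η : ℝ}

/-- The closed Euclidean ball of radius `2 * R` about `p` lies in `G`, the fields `X j` are
`K j`-Lipschitz on it, and the bounds of condition (◇) hold on it with constants `C₁`, `C₂`.
Approximations are sought on the ball of radius `R`; the factor `2` leaves room for mollifying. -/
structure IsControlledBall (S : CCData d s) (α : ℝ) (K : Fin s → NNReal) (C₁ C₂ : ℝ)
    (p : Euc d) (R : ℝ) : Prop where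
  exponent_pos : 0 < α
  radius_pos : 0 < R
  lower_pos : 0 < C₁
  upper_pos : 0 < C₂
  subset : closedBall p (2 * R) ⊆ S.G
  lipschitzOnWith : ∀ j, LipschitzOnWith (K j) (S.X j) (closedBall p (2 * R))
  le_ccDist : ∀ x ∈ closedBall p (2 * R), ∀ y ∈ closedBall p (2 * R),
    C₁ * ‖x - y‖ ≤ S.ccDist x y
  ccDist_le : ∀ x ∈ closedBall p (2 * R), ∀ y ∈ closedBall p (2 * R),
    S.ccDist x y ≤ C₂ * ‖x - y‖ ^ α

lemma Diamond.exists_isControlledBall (hS : S.Diamond α) (hα : 0 < α) (hp : p ∈ S.G) :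
    ∃ K C₁ C₂ R, S.IsControlledBall α K C₁ C₂ p R := by
  choose U hU K hK using fun j => S.locallyLipschitz_X j p hp
  obtain ⟨ρ, hρ, hρU⟩ := nhds_basis_closedBall.mem_iff.1 <|
    inter_mem (S.isOpen_G.mem_nhds hp) (iInter_mem.2 hU)
  obtain ⟨R, rfl⟩ : ∃ R, ρ = 2 * R := ⟨ρ / 2, by ring⟩
  obtain ⟨hG, hUj⟩ := subset_inter_iff.1 hρU
  obtain ⟨C₁, hC₁, C₂, hC₂, hC⟩ := hS _ hG isBounded_closedBall
  exact ⟨K, C₁, C₂, R, hα, by linarith, hC₁, hC₂, hG,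
    fun j => (hK j).mono (hUj.trans (iInter_subset U j)),
    fun x hx y hy => (hC x hx y hy).1, fun x hx y hy => (hC x hx y hy).2⟩

namespace IsControlledBall

variable (hS : S.IsControlledBall α K C₁ C₂ p R)
  (hFS : ∀ x ∈ closedBall p (2 * R), ∀ y ∈ closedBall p (2 * R), |F x - F y| ≤ L * S.ccDist x y)

include hS

lemma ball_subset_closedBall_two_mul : ball p R ⊆ closedBall p (2 * R) :=
  ball_subset_closedBall.trans (closedBall_subset_closedBall (by linarith [hS.radius_pos]))

include hFS

lemma abs_sub_le (hx : x ∈ closedBall p (2 * R)) (hy : y ∈ closedBall p (2 * R)) :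
    |F x - F y| ≤ L * C₂ * ‖x - y‖ ^ α := by
  rw [mul_assoc]
  exact (hFS x hx y hy).trans (mul_le_mul_of_nonneg_left (hS.ccDist_le x hx y hy) L.coe_nonneg)

lemma abs_sub_le_of_norm_sub_le (hx : x ∈ closedBall p (2 * R)) (hy : y ∈ closedBall p (2 * R))
    {r : ℝ} (hxy : ‖x - y‖ ≤ r) : |F x - F y| ≤ L * C₂ * r ^ α := by
  refine (hS.abs_sub_le hFS hx hy).trans ?_
  have := hS.upper_pos.le
  have := hS.exponent_pos.le
  gcongr

lemma integrableOn : IntegrableOn F (closedBall p (2 * R)) :=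
  ContinuousOn.integrableOn_compact (isCompact_closedBall p (2 * R)) <|
    continuousOn_of_dist_le_mul_rpow hS.exponent_pos fun x hx y hy => by
      rw [Real.dist_eq, dist_eq_norm]
      exact hS.abs_sub_le hFS hx hy

section Mollification

variable (hF : LocallyIntegrable F) {φ : ContDiffBump (0 : Euc d)} (hφ : 2 * φ.rOut ≤ R)

omit hS hFS in
include hφ in
lemma closedBall_two_mul_rOut_subset (hx : x ∈ ball p R) :
    closedBall x (2 * φ.rOut) ⊆ closedBall p (2 * R) :=
  closedBall_subset_closedBall' (by linarith [mem_ball.1 hx])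

include hF hφ

lemma abs_normed_convolution_sub_self_le (hx : x ∈ ball p R) :
    |(φ.normed volume ⋆[lsmul ℝ ℝ, volume] F) x - F x| ≤ L * C₂ * (2 * φ.rOut) ^ α := by
  rw [← Real.dist_eq]
  refine φ.dist_normed_convolution_le hF.aestronglyMeasurable fun y hy => ?_
  have hy' : y ∈ closedBall x (2 * φ.rOut) :=
    ball_subset_closedBall (ball_subset_ball (by linarith [φ.rOut_pos]) hy)
  rw [Real.dist_eq]
  exact hS.abs_sub_le_of_norm_sub_le hFS (closedBall_two_mul_rOut_subset hφ hx hy')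
    (hS.ball_subset_closedBall_two_mul hx) (by rwa [← dist_eq_norm])

lemma abs_normed_convolution_sub_normed_convolution_le (hx : x ∈ ball p R) (hy : y ∈ ball p R) :
    |(φ.normed volume ⋆[lsmul ℝ ℝ, volume] F) x - (φ.normed volume ⋆[lsmul ℝ ℝ, volume] F) y| ≤
      L * C₂ * ‖x - y‖ ^ α := by
  refine abs_normed_convolution_sub_le φ hF fun w hw => ?_
  have hmem : ∀ z ∈ ball p R, z - w ∈ closedBall p (2 * R) := fun z hz => by
    refine closedBall_two_mul_rOut_subset hφ hz ?_
    rw [mem_closedBall, dist_eq_norm, sub_sub_cancel_left, norm_neg]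
    linarith [mem_ball_zero_iff.1 hw, φ.rOut_pos]
  simpa only [sub_sub_sub_cancel_right] using hS.abs_sub_le hFS (hmem x hx) (hmem y hy)

lemma norm_horizontalGrad_normed_convolution_le {ℓ : NNReal} {C : ℝ}
    (hℓ : LipschitzWith ℓ (φ.normed volume))
    (hC : ℓ * φ.rOut * volume.real (closedBall x φ.rOut) ≤ C) (hx : x ∈ ball p R) :
    ‖S.horizontalGrad (φ.normed volume ⋆[lsmul ℝ ℝ, volume] F) x‖ ≤
      L + 2 * (L * C₂ * (2 * φ.rOut) ^ α) * (∑ j, K j : NNReal) *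
        (finrank ℝ (Euc d) + 2 * C) := by
  have hsub := closedBall_two_mul_rOut_subset hφ hx
  refine norm_le_of_forall_inner_le fun c hc => ?_
  rw [← fderiv_horizontalField]
  refine fderiv_normed_convolution_apply_le φ hℓ hC
    ((lipschitzOnWith_horizontalField hS.lipschitzOnWith hc).mono hsub) hF (fun y hy => ?_)
    fun γ t ht hγ hγx => ?_
  · exact hS.abs_sub_le_of_norm_sub_le hFS (hsub hy) (hS.ball_subset_closedBall_two_mul hx)
      (by rwa [← dist_eq_norm])
  · have hmem : ∀ u ∈ Icc 0 t, γ u ∈ closedBall p (2 * R) := fun u hu => hsub (hγx hu)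
    have hadm := admissible_of_isIntegralCurveOn hc ht hγ fun u hu => hS.subset (hmem u hu)
    calc F (γ t) - F (γ 0) ≤ |F (γ 0) - F (γ t)| := by
          rw [abs_sub_comm]; exact le_abs_self _
      _ ≤ L * S.ccDist (γ 0) (γ t) := hFS _ (hmem 0 ⟨le_rfl, ht⟩) _ (hmem t ⟨ht, le_rfl⟩)
      _ ≤ L * t := mul_le_mul_of_nonneg_left hadm.ccDist_le L.coe_nonneg

omit hφ in
lemma exists_contDiff_norm_horizontalGrad_le_mul_of_locallyIntegrable (hη : 0 < η) :
    ∃ g : Euc d → ℝ, ContDiff ℝ (⊤ : ℕ∞) g ∧ (∀ x ∈ ball p R, |g x - F x| ≤ η) ∧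
      (∀ x ∈ ball p R, ‖S.horizontalGrad g x‖ ≤ L * (1 + η)) ∧
      ∀ x ∈ ball p R, ∀ y ∈ ball p R, |g x - g y| ≤ L * C₂ * ‖x - y‖ ^ α := by
  obtain ⟨C, hC0, hC⟩ := exists_lipschitzWith_normed_mul_measure_closedBall_le
    (volume : Measure (Euc d)) one_lt_two
  set D : ℝ := 2 * C₂ * (∑ j, K j : NNReal) * (finrank ℝ (Euc d) + 2 * C) with hD
  have hC₂ := hS.upper_pos.le
  obtain ⟨δ, ⟨hδ, hδR⟩, hδη⟩ := exists_rpow_mul_le hS.exponent_pos hS.radius_pos hη (L * C₂ + D)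
  let φ : ContDiffBump (0 : Euc d) := ⟨δ / 4, δ / 2, by positivity, by linarith⟩
  obtain ⟨ℓ, hℓ, hℓC⟩ := hC φ (by simp only [φ]; ring)
  have hφδ : 2 * φ.rOut = δ := by simp only [φ]; ring
  have hφ : 2 * φ.rOut ≤ R := hφδ.trans_le hδR.le
  have hD0 : 0 ≤ D := by positivity
  refine ⟨_, φ.hasCompactSupport_normed.contDiff_convolution_left (lsmul ℝ ℝ)
    φ.contDiff_normed hF, fun x hx => ?_, fun x hx => ?_, fun x hx y hy =>
    hS.abs_normed_convolution_sub_normed_convolution_le hFS hF hφ hx hy⟩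
  · calc _ ≤ L * C₂ * (2 * φ.rOut) ^ α :=
          hS.abs_normed_convolution_sub_self_le hFS hF hφ hx
      _ = δ ^ α * (L * C₂) := by rw [hφδ, mul_comm]
      _ ≤ δ ^ α * (L * C₂ + D) := by gcongr; linarith
      _ ≤ η := hδη
  · rw [← Measure.addHaar_real_closedBall_center volume x] at hℓC
    calc _ ≤ _ := hS.norm_horizontalGrad_normed_convolution_le hFS hF hφ hℓ hℓC hx
      _ = L * (1 + δ ^ α * D) := by rw [hφδ, hD]; ring
      _ ≤ L * (1 + δ ^ α * (L * C₂ + D)) := by gcongr; linarith [mul_nonneg L.coe_nonneg hC₂]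
      _ ≤ L * (1 + η) := by gcongr

end Mollification

lemma exists_contDiff_norm_horizontalGrad_le_mul (hη : 0 < η) :
    ∃ g : Euc d → ℝ, ContDiff ℝ (⊤ : ℕ∞) g ∧ (∀ x ∈ ball p R, |g x - F x| ≤ η) ∧
      (∀ x ∈ ball p R, ‖S.horizontalGrad g x‖ ≤ L * (1 + η)) ∧
      ∀ x ∈ ball p R, ∀ y ∈ ball p R, |g x - g y| ≤ L * C₂ * ‖x - y‖ ^ α := by
  set B := closedBall p (2 * R)
  have hBF : EqOn (B.indicator F) F (ball p R) :=
    eqOn_indicator.mono hS.ball_subset_closedBall_two_mul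
  have hcut : ∀ x ∈ B, ∀ y ∈ B, |B.indicator F x - B.indicator F y| ≤ L * S.ccDist x y :=
    fun x hx y hy => by simpa only [indicator_of_mem hx, indicator_of_mem hy] using hFS x hx y hy
  have hint : LocallyIntegrable (B.indicator F) :=
    ((hS.integrableOn hFS).integrable_indicator isClosed_closedBall.measurableSet).locallyIntegrable
  obtain ⟨g, hg, hgF, hgX, hgH⟩ :=
    hS.exists_contDiff_norm_horizontalGrad_le_mul_of_locallyIntegrable hcut hint hη
  exact ⟨g, hg, fun x hx => hBF hx ▸ hgF x hx, hgX, hgH⟩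

end IsControlledBall

lemma horizontalGrad_const_mul_add_const {g : Euc d → ℝ} (a b : ℝ) :
    S.horizontalGrad (fun z => a * g z + b) x = a • S.horizontalGrad g x := by
  ext j
  simp [horizontalGrad, ← smul_eq_mul, ← Pi.smul_def, fderiv_const_smul_field]

namespace IsControlledBall

theorem exists_contDiff_norm_horizontalGrad_le (hS : S.IsControlledBall α K C₁ C₂ p R)
    (hFS : ∀ x ∈ closedBall p (2 * R), ∀ y ∈ closedBall p (2 * R),
      |F x - F y| ≤ L * S.ccDist x y) {ε : ℝ} (hε : 0 < ε) :
    ∃ g : Euc d → ℝ, ContDiff ℝ (⊤ : ℕ∞) g ∧ (∀ x ∈ ball p R, |F x - g x| < ε) ∧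
      (∀ x ∈ ball p R, ‖S.horizontalGrad g x‖ ≤ L) ∧ g p = F p ∧
      ∀ x ∈ ball p R, ∀ y ∈ ball p R, |g x - g y| ≤ L * C₂ * ‖x - y‖ ^ α := by
  have hp : p ∈ ball p R := mem_ball_self hS.radius_pos
  set C : ℝ := L * C₂ * R ^ α
  have hC0 : 0 ≤ C := (abs_nonneg _).trans (hS.abs_sub_le_of_norm_sub_le hFS
    (hS.ball_subset_closedBall_two_mul hp) (hS.ball_subset_closedBall_two_mul hp)
    (by simpa using hS.radius_pos.le))
  obtain ⟨η, hη, hηε⟩ : ∃ η > 0, η * (2 + C) < ε :=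
    ⟨ε / (3 + C), by positivity, by
      rw [div_mul_eq_mul_div, div_lt_iff₀ (by positivity)]
      gcongr
      norm_num⟩
  obtain ⟨g, hg, hgF, hgX, hgH⟩ := hS.exists_contDiff_norm_horizontalGrad_le_mul hFS hη
  have hinv : (1 + η)⁻¹ ≤ 1 := inv_le_one_of_one_le₀ (by linarith)
  refine ⟨fun z => (1 + η)⁻¹ * g z + (F p - (1 + η)⁻¹ * g p),
    (contDiff_const.mul hg).add contDiff_const, fun x hx => ?_, fun x hx => ?_, by ring,
    fun x hx y hy => ?_⟩
  · have hxp : |F x - F p| ≤ C := hS.abs_sub_le_of_norm_sub_le hFS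
      (hS.ball_subset_closedBall_two_mul hx) (hS.ball_subset_closedBall_two_mul hp)
      (mem_ball_iff_norm.1 hx).le
    rw [abs_sub_comm]
    refine lt_of_eq_of_lt (congrArg _ ?_) ((abs_inv_one_add_mul_sub_add_sub_le hη.le
      (hgF x hx) (hgF p hp) hxp).trans_lt hηε)
    ring
  · rw [horizontalGrad_const_mul_add_const, norm_smul, Real.norm_of_nonneg (by positivity),
      inv_mul_le_iff₀ (by positivity), mul_comm]
    exact hgX x hx
  · rw [add_sub_add_right_eq_sub, ← mul_sub, abs_mul, abs_of_nonneg (by positivity)]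
    exact (mul_le_of_le_one_left (abs_nonneg _) hinv).trans (hgH x hx y hy)

end IsControlledBall

end CCData

lemma geodesicHull_closedBall_subset {M : Type*} [MetricSpace M] (x : M) (r : ℝ) :
    geodesicHull (closedBall x r) ⊆ closedBall x (3 * r) := by
  refine closure_minimal ?_ isClosed_closedBall
  simp only [iUnion_subset_iff]
  rintro p hp q hq - γ ⟨hγ0, -, hγ⟩ _ ⟨t, ht, rfl⟩
  have hpt : dist (γ t) p = t := by
    rw [← hγ0, hγ t ht 0 (left_mem_Icc.2 dist_nonneg), sub_zero, abs_of_nonneg ht.1]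
  rw [mem_closedBall] at hp hq ⊢
  linarith [dist_triangle (γ t) p x, dist_triangle_right p q x, ht.2]

namespace CCRepresentation

variable {d s : ℕ} {S : CCData d s} {α C₁ C₂ R r b : ℝ} {K : Fin s → NNReal}
  {M : Type*} [MetricSpace M] {ι : M → Euc d} {x₀ x y : M} {γ : ℝ → Euc d}
  (hι : CCRepresentation S M ι)

include hι

lemma apply_mem (x : M) : ι x ∈ S.G := hι.range_eq ▸ mem_range_self x

lemma exists_eq {u : Euc d} (hu : u ∈ S.G) : ∃ x, ι x = u := by rwa [← hι.range_eq] at hu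

lemma dist_le_of_admissible (hγ : S.Admissible b γ) (hx : γ 0 = ι x) (hy : γ b = ι y) :
    dist x y ≤ b := by
  rw [hι.dist_eq, ← hx, ← hy]
  exact hγ.ccDist_le

lemma abs_extend_sub_le {f : M → ℝ} {L : NNReal} (hf : LipschitzWith L f) {B : Set (Euc d)}
    (hB : B ⊆ S.G) : ∀ u ∈ B, ∀ v ∈ B,
      |Function.extend ι f 0 u - Function.extend ι f 0 v| ≤ L * S.ccDist u v := by
  intro u hu v hv
  obtain ⟨x, rfl⟩ := hι.exists_eq (hB hu)
  obtain ⟨y, rfl⟩ := hι.exists_eq (hB hv)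
  rw [hι.injective.extend_apply, hι.injective.extend_apply, ← hι.dist_eq, ← Real.dist_eq]
  exact hf.dist_le_mul x y

lemma exists_admissible (hr : dist x y < r) :
    ∃ b γ, S.Admissible b γ ∧ γ 0 = ι x ∧ γ b = ι y ∧ b < r := by
  obtain rfl | hxy := eq_or_ne x y
  · rw [dist_self] at hr
    exact ⟨0, fun _ => ι x, ⟨le_rfl, fun _ _ => hι.apply_mem x, fun _ _ => 0,
      fun _ => measurable_const, by simp, by simp, by simp⟩, rfl, rfl, hr⟩
  -- As `sInf ∅ = 0`, a positive `ccDist` forces the set of admissible lengths to be nonempty.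
  · have hne : {b | ∃ γ, S.Admissible b γ ∧ γ 0 = ι x ∧ γ b = ι y}.Nonempty := by
      by_contra! hempty
      have hpos := dist_pos.2 hxy
      rw [hι.dist_eq, CCData.ccDist, hempty, Real.sInf_empty] at hpos
      exact hpos.false
    rw [hι.dist_eq] at hr
    obtain ⟨b, ⟨γ, hγ, hx, hy⟩, hb⟩ := exists_lt_of_csInf_lt hne hr
    exact ⟨b, γ, hγ, hx, hy, hb⟩

variable (hS : S.IsControlledBall α K C₁ C₂ (ι x₀) R)

include hS

lemma mem_ball_of_dist_lt (hx : dist x₀ x < C₁ * R) : ι x ∈ ball (ι x₀) R := by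
  obtain ⟨b, γ, hγ, hγ0, hγb, hb⟩ := hι.exists_admissible hx
  by_contra hxR
  rw [mem_ball_iff_norm, not_lt, ← hγb, ← hγ0] at hxR
  have hR := hS.radius_pos
  obtain ⟨t, ht, htR⟩ : ∃ t ∈ Icc 0 b, ‖γ t - γ 0‖ = R :=
    intermediate_value_Icc hγ.1 (hγ.continuousOn.sub continuousOn_const).norm
      ⟨by simpa using hR.le, hxR⟩
  have hlower : C₁ * R ≤ S.ccDist (γ 0) (γ t) := by
    rw [← htR, norm_sub_rev]
    refine hS.le_ccDist _ ?_ _ ?_ <;> rw [mem_closedBall_iff_norm, ← hγ0]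
    · rw [sub_self, norm_zero]; positivity
    · rw [htR]; linarith
  linarith [(hγ.restrict ht).ccDist_le, ht.2]

lemma mapsTo_ball_of_admissible (hγ : S.Admissible b γ) (hx : γ 0 = ι x)
    (hb : dist x₀ x + b < C₁ * R) : MapsTo γ (Icc 0 b) (ball (ι x₀) R) := by
  intro t ht
  obtain ⟨y, hy⟩ := hι.exists_eq (hγ.2.1 t ht)
  rw [← hy]
  refine hι.mem_ball_of_dist_lt hS ?_
  linarith [dist_triangle x₀ x y, hι.dist_le_of_admissible (hγ.restrict ht) hx hy.symm, ht.2]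

lemma isCompact_closedBall (hr : r < C₁ * R) : IsCompact (closedBall x₀ r) := by
  have : Nonempty M := ⟨x₀⟩
  have hinv : ContinuousOn (Function.invFun ι) (closedBall (ι x₀) (2 * R)) := by
    refine continuousOn_of_dist_le_mul_rpow (C := C₂) hS.exponent_pos fun u hu v hv => ?_
    obtain ⟨x, rfl⟩ := hι.exists_eq (hS.subset hu)
    obtain ⟨y, rfl⟩ := hι.exists_eq (hS.subset hv)
    rw [Function.leftInverse_invFun hι.injective, Function.leftInverse_invFun hι.injective,
      hι.dist_eq, dist_eq_norm]
    exact hS.ccDist_le _ hu _ hv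
  refine ((ProperSpace.isCompact_closedBall _ _).image_of_continuousOn hinv).of_isClosed_subset
    isClosed_closedBall fun x hx => ⟨ι x, ?_, Function.leftInverse_invFun hι.injective x⟩
  rw [mem_closedBall, dist_comm] at hx
  exact hS.ball_subset_closedBall_two_mul (hι.mem_ball_of_dist_lt hS (hx.trans_lt hr))

lemma sub_le_mul_dist {g : Euc d → ℝ} {L : NNReal} (hg : ContDiff ℝ 1 g)
    (hL : ∀ u ∈ ball (ι x₀) R, ‖S.horizontalGrad g u‖ ≤ L)
    (hxy : dist x₀ x + dist x y < C₁ * R) : g (ι y) - g (ι x) ≤ L * dist x y := by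
  have hcurve : ∀ ℓ ∈ Ioo (dist x y) (C₁ * R - dist x₀ x), g (ι y) - g (ι x) ≤ L * ℓ := by
    rintro ℓ ⟨hℓ, hℓR⟩
    obtain ⟨b, γ, hγ, hγ0, hγb, hb⟩ := hι.exists_admissible hℓ
    have hγR := hι.mapsTo_ball_of_admissible hS hγ hγ0 (by linarith)
    rw [← hγb, ← hγ0]
    exact (hγ.sub_le hg hγR hL).trans (mul_le_mul_of_nonneg_left hb.le L.coe_nonneg)
  have hlim : Tendsto (fun ℓ : ℝ => L * ℓ) (𝓝[>] dist x y) (𝓝 (L * dist x y)) :=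
    ((continuous_const_mul (L : ℝ)).tendsto _).mono_left nhdsWithin_le_nhds
  exact ge_of_tendsto hlim <|
    eventually_of_mem (Ioo_mem_nhdsGT (lt_sub_iff_add_lt'.2 hxy)) hcurve

lemma lipschitzOnWith_comp {g : Euc d → ℝ} {L : NNReal} (hg : ContDiff ℝ 1 g)
    (hL : ∀ u ∈ ball (ι x₀) R, ‖S.horizontalGrad g u‖ ≤ L) (hr : 3 * r < C₁ * R) :
    LipschitzOnWith L (fun x => g (ι x)) (closedBall x₀ r) := by
  refine LipschitzOnWith.of_le_add_mul L fun x hx y hy => ?_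
  rw [mem_closedBall, dist_comm] at hx hy
  have := hι.sub_le_mul_dist hS (x := y) (y := x) hg hL
    (by linarith [dist_triangle_left y x x₀, dist_comm x₀ x])
  rw [dist_comm x y]
  linarith

end CCRepresentation

end SmoothApproximation

theorem ccSpace_smooth_approximation_general
    {d s : ℕ} (S : CCData d s)
    {M : Type*} [MetricSpace M] (ι : M → Euc d) (hrep : CCRepresentation S M ι)
    (α : ℝ) (hα : 0 < α) (hdia : S.Diamond α)
    (x₀ : M) :
    ∃ K : Set M, IsCompact K ∧ K ∈ 𝓝 x₀ ∧
    ∃ Ω : Set (Euc d), IsOpen Ω ∧ IsConnected Ω ∧ Ω ⊆ S.G ∧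
      ι '' geodesicHull K ⊆ Ω ∧
    ∃ β > (0 : ℝ),
      ∀ (f : M → ℝ) (L : NNReal), LipschitzWith L f → ∀ ε > (0 : ℝ),
        ∃ g : Euc d → ℝ,
          ContDiffOn ℝ (⊤ : ℕ∞) g Ω ∧
          (∀ x ∈ geodesicHull K, |f x - g (ι x)| < ε) ∧
          (∀ x ∈ geodesicHull K,
            Real.sqrt (∑ j, (fderiv ℝ g (ι x) (S.X j (ι x))) ^ 2) ≤ L) ∧
          g (ι x₀) = f x₀ ∧
          (∀ x ∈ geodesicHull K, ∀ y ∈ geodesicHull K, x ≠ y →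
            |g (ι x) - g (ι y)| ≤ (L : ℝ) * β * ‖ι x - ι y‖ ^ α) ∧
          LipschitzOnWith L (fun x : M => g (ι x)) K := by
  obtain ⟨K, C₁, C₂, R, hS⟩ := hdia.exists_isControlledBall hα (hrep.apply_mem x₀)
  have hCR : 0 < C₁ * R := mul_pos hS.lower_pos hS.radius_pos
  let r := C₁ * R / 4
  have hr : 0 < r := by positivity
  have hr3 : 3 * r < C₁ * R := by simp only [r]; linarith
  have hΓ : ∀ x ∈ geodesicHull (closedBall x₀ r), ι x ∈ ball (ι x₀) R := fun x hx =>
    hrep.mem_ball_of_dist_lt hS <|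
      (mem_closedBall'.1 (geodesicHull_closedBall_subset x₀ r hx)).trans_lt hr3
  refine ⟨closedBall x₀ r, hrep.isCompact_closedBall hS (by linarith), closedBall_mem_nhds x₀ hr,
    ball (ι x₀) R, isOpen_ball, (convex_ball _ _).isConnected (nonempty_ball.2 hS.radius_pos),
    hS.ball_subset_closedBall_two_mul.trans hS.subset, image_subset_iff.2 hΓ, C₂, hS.upper_pos,
    fun f L hf ε hε => ?_⟩
  have hF : ∀ x, Function.extend ι f 0 (ι x) = f x := hrep.injective.extend_apply f 0
  obtain ⟨g, hg, hgF, hgX, hg₀, hgH⟩ :=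
    hS.exists_contDiff_norm_horizontalGrad_le (hrep.abs_extend_sub_le hf hS.subset) hε
  simp only [hF] at hg₀
  refine ⟨g, hg.contDiffOn, fun x hx => hF x ▸ hgF _ (hΓ x hx), fun x hx => ?_, hg₀,
    fun x hx y hy _ => hgH _ (hΓ x hx) _ (hΓ y hy),
    hrep.lipschitzOnWith_comp hS (hg.of_le (by norm_cast)) hgX hr3⟩
  rw [← CCData.norm_horizontalGrad]
  exact hgX _ (hΓ x hx)

/-- **Smooth approximation of Lipschitz functions on Carnot–Carathéodory spaces
satisfying (◇).**  Let `(G, d_cc)` be a Carnot–Carathéodory metric space satisfying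
condition (◇) with exponent `α` (realized as the pointed metric space `M` via `ι`), and
let `x₀ ∈ G`.  Then there are a compact neighborhood `K` of `x₀`, an open connected set
`Ω ⊆ G` containing `Γ_K`, and a constant `β > 0` such that for every `L`-Lipschitz
function `f : G → ℝ` and every `ε > 0` there exists `g : Ω → ℝ` with:
(i) `g` is `C^∞` on `Ω`; (ii) `sup_{Γ_K} |f − g| < ε`;
(iii) `‖X(g)(x)‖_{ℓ₂^s} ≤ L` on `Γ_K`; (iv) `g(x₀) = f(x₀)`;
(v) `|g(x) − g(y)| ≤ L·β·‖x − y‖₂^α` for distinct `x, y ∈ Γ_K`.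
In particular, `g|_K` is `d_cc`-Lipschitz with constant at most `L`. -/
theorem ccSpace_smooth_approximation
    {d s : ℕ} (S : CCData d s)
    {M : Type*} [MetricSpace M] (ι : M → Euc d) (hrep : CCRepresentation S M ι)
    (α : ℝ) (hα : α ∈ Set.Ioo (0 : ℝ) 1) (hdia : S.Diamond α)
    (x₀ : M) :
    ∃ K : Set M, IsCompact K ∧ K ∈ 𝓝 x₀ ∧
    ∃ Ω : Set (Euc d), IsOpen Ω ∧ IsConnected Ω ∧ Ω ⊆ S.G ∧
      ι '' geodesicHull K ⊆ Ω ∧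
    ∃ β > (0 : ℝ),
      ∀ (f : M → ℝ) (L : NNReal), LipschitzWith L f → ∀ ε > (0 : ℝ),
        ∃ g : Euc d → ℝ,
          ContDiffOn ℝ (⊤ : ℕ∞) g Ω ∧
          (∀ x ∈ geodesicHull K, |f x - g (ι x)| < ε) ∧
          (∀ x ∈ geodesicHull K,
            Real.sqrt (∑ j, (fderiv ℝ g (ι x) (S.X j (ι x))) ^ 2) ≤ L) ∧
          g (ι x₀) = f x₀ ∧
          (∀ x ∈ geodesicHull K, ∀ y ∈ geodesicHull K, x ≠ y →
            |g (ι x) - g (ι y)| ≤ (L : ℝ) * β * ‖ι x - ι y‖ ^ α) ∧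
          LipschitzOnWith L (fun x : M => g (ι x)) K :=
  ccSpace_smooth_approximation_general S ι hrep α hα.1 hdia x₀
end
end
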